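/- Corollary: Let D be a domain in ℝ⁴ = ℝ²×ℝ² whose boundary ∂D is a smooth hypersurface in some open set U ⊆ ℝ⁴, and suppose that either D or ℝ⁴∖D is strictly convex in this neighborhood, i.e. D ∩ U (respectively (ℝ⁴∖D) ∩ U) is convex and ∂D ∩ U contains no nondegenerate line segment. Then for every (p1,p2,p3) with 1/p1+1/p2+1/p3 = 1, 1 < p1,p2,p3 < ∞, and exactly one of p1,p2,p3 less than 2, there is no constant C such that ‖T_D(f,g)‖_{L^{p3'}(ℝ²)} ≤ C ‖f‖_{L^{p1}(ℝ²)} ‖g‖_{L^{p2}(ℝ²)} for all Schwartz f,g on ℝ², where p3' = p3/(p3−1); i.e., T_D does not extend to a bounded bilinear Fourier multiplier from L^{p1}(ℝ²)×L^{p2}(ℝ²) to L^{p3'}(ℝ²). -/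

import Mathlib

open MeasureTheory Filter Topology Set

noncomputable section

abbrev V2 : Type := ℝ × ℝ
abbrev Amb : Type := V2 × V2 × V2

def dot2 (x y : V2) : ℝ := x.1 * y.1 + x.2 * y.2

def dot6 (x y : Amb) : ℝ := dot2 x.1 y.1 + dot2 x.2.1 y.2.1 + dot2 x.2.2 y.2.2

def Gamma : Set Amb := {x | x.1 + x.2.1 + x.2.2 = 0}

def Phi (x : V2 × V2) : Amb := (x.1, x.2, -(x.1 + x.2))

def FT (f : V2 → ℂ) (ξ : V2) : ℂ :=
  ∫ x : V2, Complex.exp (-(2 * Real.pi * dot2 x ξ) * Complex.I) * f x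

def LambdaIntegrand (Dt : Set Amb) (f1 f2 f3 : V2 → ℂ) (ξ : V2 × V2) : ℂ :=
  Set.indicator Dt (fun _ => (1 : ℂ)) (Phi ξ) *
    (FT f1 ξ.1 * (FT f2 ξ.2 * FT f3 (-(ξ.1 + ξ.2))))

def Lambda (Dt : Set Amb) (f1 f2 f3 : V2 → ℂ) : ℂ :=
  ∫ ξ : V2 × V2, LambdaIntegrand Dt f1 f2 f3 ξ

def OfType (Lam : (V2 → ℂ) → (V2 → ℂ) → (V2 → ℂ) → ℂ) (p1 p2 p3 : ℝ) : Prop :=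
  ∃ C : ℝ, ∀ f1 f2 f3 : SchwartzMap V2 ℂ,
    ENNReal.ofReal ‖Lam ⇑f1 ⇑f2 ⇑f3‖ ≤ ENNReal.ofReal C *
      (eLpNorm (⇑f1) (ENNReal.ofReal p1) volume *
        (eLpNorm (⇑f2) (ENNReal.ofReal p2) volume *
          eLpNorm (⇑f3) (ENNReal.ofReal p3) volume))

def bdry (Dt : Set Amb) : Set Amb := Phi '' frontier (Phi ⁻¹' Dt)

def comp3 (x : Amb) : Fin 3 → V2 := ![x.1, x.2.1, x.2.2]

def IsSmoothHypersurface (M : Set (V2 × V2)) : Prop :=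
  ∀ p ∈ M, ∃ (W : Set (V2 × V2)) (g : V2 × V2 → ℝ),
    IsOpen W ∧ p ∈ W ∧ ContDiffOn ℝ (⊤ : ℕ∞) g W ∧
    (∀ x ∈ W, fderiv ℝ g x ≠ 0) ∧ M ∩ W = {x ∈ W | g x = 0}

def SliceCurvature (Dt : Set Amb) (j : Fin 3) : Prop :=
  ∃ U : Set Amb, U ⊆ Gamma ∧ IsOpen (Phi ⁻¹' U) ∧
    IsSmoothHypersurface (Phi ⁻¹' (bdry Dt ∩ U)) ∧
    IsConnected (Phi ⁻¹' (bdry Dt ∩ U)) ∧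
    ∃ (ξ0 : V2) (γ : ℝ → Amb) (t0 ε : ℝ), 0 < ε ∧
      ContDiffOn ℝ 2 γ (Set.Ioo (t0 - ε) (t0 + ε)) ∧
      (∀ t ∈ Set.Ioo (t0 - ε) (t0 + ε), γ t ∈ bdry Dt ∩ U ∧ comp3 (γ t) j = ξ0) ∧
      (∀ t ∈ Set.Ioo (t0 - ε) (t0 + ε), deriv γ t ≠ 0) ∧
      LinearIndependent ℝ ![deriv γ t0, deriv (deriv γ) t0]

def Pv (v : Amb) : Set Amb := {ξ | ξ ∈ Gamma ∧ 0 < dot6 ξ v}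

def blowSet (Dt : Set Amb) (ξ : Amb) (r : ℝ) : Set Amb := (fun y => r • (y - ξ)) '' Dt

def BlowupNormal (Dt : Set Amb) (ξ v : Amb) : Prop :=
  ∀ᵐ x : V2 × V2, Filter.Tendsto
    (fun r : ℝ => Set.indicator (blowSet Dt ξ r) (fun _ => (1 : ℝ)) (Phi x))
    Filter.atTop (𝓝 (Set.indicator (Pv v) (fun _ => (1 : ℝ)) (Phi x)))

def truncPV (v : Amb) (f1 f2 f3 : V2 → ℂ) (δ : ℝ) : ℂ :=
  ∫ t in {t : ℝ | δ < |t| ∧ |t| < δ⁻¹},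
    (∫ x : V2, f1 (x - t • v.1) * (f2 (x - t • v.2.1) * f3 (x - t • v.2.2))) / (t : ℂ)

def HasPV (v : Amb) (f1 f2 f3 : V2 → ℂ) (L : ℂ) : Prop :=
  Filter.Tendsto (truncPV v f1 f2 f3) (𝓝[>] (0 : ℝ)) (𝓝 L)

/-- The bilinear Fourier multiplier operator with symbol `χ_D`. -/
def TD (D : Set (V2 × V2)) (f g : V2 → ℂ) (x : V2) : ℂ :=
  ∫ ξ : V2 × V2, Set.indicator D (fun _ => (1 : ℂ)) ξ *
    (FT f ξ.1 * (FT g ξ.2 * Complex.exp ((2 * Real.pi * dot2 (ξ.1 + ξ.2) x) * Complex.I)))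

/-- The character `t ↦ e^{2πit}` of the real line. -/
def ee (t : ℝ) : ℂ := Complex.exp ((2 * Real.pi * t : ℝ) * Complex.I)

lemma norm_ee (t : ℝ) : ‖ee t‖ = 1 := Complex.norm_exp_ofReal_mul_I _

lemma ee_add (s t : ℝ) : ee (s + t) = ee s * ee t := by
  rw [ee, ee, ee, ← Complex.exp_add]; congr 1; push_cast; ring

@[fun_prop] lemma contDiff_ee {n : WithTop ℕ∞} : ContDiff ℝ n ee := by
  unfold ee
  exact ((Complex.ofRealCLM.contDiff.comp (contDiff_const.mul contDiff_id)).mul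
    contDiff_const).cexp

@[fun_prop] lemma continuous_ee : Continuous ee := (contDiff_ee (n := 0)).continuous

@[fun_prop] lemma Continuous.dot2 {X : Type*} [TopologicalSpace X] {f g : X → V2}
    (hf : Continuous f) (hg : Continuous g) : Continuous fun x => dot2 (f x) (g x) := by
  unfold _root_.dot2; fun_prop

lemma FT_eq (f : V2 → ℂ) (ξ : V2) : FT f ξ = ∫ x, ee (-dot2 x ξ) * f x := by
  unfold FT ee
  congr 1; ext x; congr 2; push_cast; ring

lemma exists_FT_schwartz (f : SchwartzMap V2 ℂ) :
    ∃ F : SchwartzMap V2 ℂ, (∀ ξ, F ξ = FT f ξ) ∧ ∀ x, f x = ∫ ξ, F ξ * ee (dot2 ξ x) := by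
  let e := Complex.equivRealProdCLM
  let g : SchwartzMap ℂ ℂ := SchwartzMap.compCLMOfContinuousLinearEquiv ℝ e f
  let G : SchwartzMap ℂ ℂ := FourierTransform.fourier g
  let F : SchwartzMap V2 ℂ := SchwartzMap.compCLMOfContinuousLinearEquiv ℝ e.symm G
  have hmp := Complex.volume_preserving_equiv_real_prod
  have hin : ∀ z w : ℂ, inner ℝ z w = dot2 (e z) (e w) := by
    intro z w
    simp [e, dot2, Complex.inner, mul_comm]
  have hintegral : ∀ H : V2 → ℂ, ∫ z, H (e z) = ∫ x, H x := fun H =>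
    hmp.integral_comp Complex.measurableEquivRealProd.measurableEmbedding H
  refine ⟨F, fun ξ => ?_, fun x => ?_⟩
  · change FourierTransform.fourier (g : ℂ → ℂ) (e.symm ξ) = _
    rw [Real.fourier_eq', FT_eq, ← hintegral]
    congr 1; ext z
    rw [hin]
    rw [e.apply_symm_apply, ee, smul_eq_mul,
      show -2 * Real.pi * dot2 (e z) ξ = 2 * Real.pi * -dot2 (e z) ξ by ring]
    rfl
  · have h1 : FourierTransformInv.fourierInv (G : ℂ → ℂ) = g := by
      rw [← SchwartzMap.fourierInv_coe]; simp [G]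
    have h2 : f x = g (e.symm x) := by simp [g]
    rw [h2, ← h1, Real.fourierInv_eq', ← hintegral]
    congr 1; ext z
    rw [hin]
    rw [e.apply_symm_apply, ee, smul_eq_mul, mul_comm]
    change _ = G (e.symm (e z)) * _
    rw [e.symm_apply_apply]

lemma continuous_FT (f : SchwartzMap V2 ℂ) : Continuous (FT f) := by
  obtain ⟨F, hF, -⟩ := exists_FT_schwartz f
  rw [← funext hF]; exact F.continuous

lemma integrable_FT (f : SchwartzMap V2 ℂ) : Integrable (FT f) := by
  obtain ⟨F, hF, -⟩ := exists_FT_schwartz f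
  rw [← funext hF]; exact F.integrable

lemma FT_inversion (f : SchwartzMap V2 ℂ) (x : V2) :
    f x = ∫ ξ, FT f ξ * ee (dot2 ξ x) := by
  obtain ⟨F, hF, h⟩ := exists_FT_schwartz f
  rw [h]; simp_rw [hF]

lemma norm_FT_le (f : V2 → ℂ) (ξ : V2) : ‖FT f ξ‖ ≤ ∫ x, ‖f x‖ := by
  rw [FT_eq]
  refine (norm_integral_le_integral_norm _).trans_eq ?_
  simp [norm_ee]

lemma FT_modulate (f : V2 → ℂ) (a ξ : V2) :
    FT (fun x => ee (dot2 x a) * f x) ξ = FT f (ξ - a) := by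
  simp_rw [FT_eq, ← mul_assoc, ← ee_add]
  congr 1; ext x; congr 2; unfold dot2; simp; ring

lemma FT_const_mul (c : ℂ) (f : V2 → ℂ) (ξ : V2) : FT (fun x => c * f x) ξ = c * FT f ξ := by
  rw [FT_eq, FT_eq, ← integral_const_mul]; congr 1; ext x; ring

lemma FT_sum {ι : Type*} (s : Finset ι) (f : ι → SchwartzMap V2 ℂ) (ξ : V2) :
    FT (fun x => ∑ i ∈ s, f i x) ξ = ∑ i ∈ s, FT (f i) ξ := by
  simp_rw [FT_eq, Finset.mul_sum]
  rw [integral_finsetSum]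
  intro i _
  refine (f i).integrable.bdd_mul (c := 1) (by fun_prop) (ae_of_all _ fun x => by simp [norm_ee])

/-- The trilinear form `∫ χ_D(ξ,η) f̂(ξ) ĝ(η) ĥ(-ξ-η) dξ dη`. -/
def Lam (D : Set (V2 × V2)) (f g h : V2 → ℂ) : ℂ :=
  ∫ ξ : V2 × V2, indicator D (fun _ => (1 : ℂ)) ξ *
    (FT f ξ.1 * (FT g ξ.2 * FT h (-(ξ.1 + ξ.2))))

lemma integrable_FT_mul (f g : SchwartzMap V2 ℂ) :
    Integrable fun ξ : V2 × V2 => FT f ξ.1 * FT g ξ.2 :=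
  (integrable_FT f).mul_prod (integrable_FT g)

lemma integrable_FT_triple (f g h : SchwartzMap V2 ℂ) :
    Integrable fun ξ : V2 × V2 => FT f ξ.1 * (FT g ξ.2 * FT h (-(ξ.1 + ξ.2))) := by
  have := (integrable_FT_mul f g).mul_bdd (c := ∫ x, ‖h x‖)
    (g := fun ξ : V2 × V2 => FT h (-(ξ.1 + ξ.2)))
    (((continuous_FT h).comp (by fun_prop)).aestronglyMeasurable)
    (ae_of_all _ fun x => norm_FT_le _ _)
  simpa only [mul_assoc] using this

lemma integrable_indicator_mul {X : Type*} [MeasurableSpace X] {μ : Measure X} {D : Set X}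
    (hD : MeasurableSet D) {Q : X → ℂ} (hQ : Integrable Q μ) :
    Integrable (fun ξ => indicator D (fun _ => (1 : ℂ)) ξ * Q ξ) μ := by
  refine hQ.bdd_mul (c := 1) (measurable_const.indicator hD).aestronglyMeasurable
    (ae_of_all _ fun x => ?_)
  by_cases hx : x ∈ D <;> simp [hx]

lemma Lam_sum_sum {ι : Type*} (s : Finset ι) {D : Set (V2 × V2)} (hD : MeasurableSet D)
    (f : SchwartzMap V2 ℂ) (g h : ι → SchwartzMap V2 ℂ) (c : ι → ℂ) :
    Lam D f (fun x => ∑ i ∈ s, c i * g i x) (fun x => ∑ i ∈ s, c i * h i x) =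
      ∑ i ∈ s, ∑ j ∈ s, (c i * c j) * Lam D f (g i) (h j) := by
  have key : ∀ (g : ι → SchwartzMap V2 ℂ) ξ,
      FT (fun x => ∑ i ∈ s, c i * g i x) ξ = ∑ i ∈ s, c i * FT (g i) ξ := by
    intro g ξ
    have := FT_sum s (fun i => c i • g i) ξ
    simp only [_root_.smul_apply, smul_eq_mul] at this
    rw [this]
    refine Finset.sum_congr rfl fun i _ => ?_
    rw [← FT_const_mul]; rfl
  unfold Lam
  simp_rw [key]
  have : ∀ ξ : V2 × V2, indicator D (fun _ => (1 : ℂ)) ξ *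
      (FT f ξ.1 * ((∑ i ∈ s, c i * FT (g i) ξ.2) * ∑ i ∈ s, c i * FT (h i) (-(ξ.1 + ξ.2)))) =
      ∑ i ∈ s, ∑ j ∈ s, (c i * c j) * (indicator D (fun _ => (1 : ℂ)) ξ *
        (FT f ξ.1 * (FT (g i) ξ.2 * FT (h j) (-(ξ.1 + ξ.2))))) := by
    intro ξ
    rw [Finset.sum_mul_sum]
    simp_rw [Finset.mul_sum]
    refine Finset.sum_congr rfl fun i _ => Finset.sum_congr rfl fun j _ => ?_
    ring
  simp_rw [this]
  rw [integral_finsetSum]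
  · refine Finset.sum_congr rfl fun i _ => ?_
    rw [integral_finsetSum]
    · refine Finset.sum_congr rfl fun j _ => ?_
      rw [integral_const_mul]
    · intro j _
      exact (integrable_indicator_mul hD (integrable_FT_triple _ _ _)).const_mul _
  · intro i _
    refine integrable_finsetSum _ fun j _ => ?_
    exact (integrable_indicator_mul hD (integrable_FT_triple _ _ _)).const_mul _

lemma integrable_phase {P : V2 × V2 → ℂ} (hP : Integrable P) (h : SchwartzMap V2 ℂ) :
    Integrable (Function.uncurry fun (x : V2) (ξ : V2 × V2) =>
      P ξ * ee (dot2 (ξ.1 + ξ.2) x) * h x) (volume.prod volume) := by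
  have h1 : Integrable (fun z : V2 × (V2 × V2) => h z.1 * P z.2) (volume.prod volume) :=
    h.integrable.mul_prod hP
  have h2 := h1.bdd_mul (c := 1) (f := fun z : V2 × (V2 × V2) => ee (dot2 (z.2.1 + z.2.2) z.1))
    (by fun_prop) (ae_of_all _ fun x => by simp [norm_ee])
  refine h2.congr (ae_of_all _ fun z => ?_)
  simp only [Function.uncurry]; ring

lemma integral_phase_mul {P : V2 × V2 → ℂ} (hP : Integrable P) (h : SchwartzMap V2 ℂ) :
    ∫ x, (∫ ξ, P ξ * ee (dot2 (ξ.1 + ξ.2) x)) * h x = ∫ ξ, P ξ * FT h (-(ξ.1 + ξ.2)) := by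
  simp_rw [← integral_mul_const]
  rw [integral_integral_swap (integrable_phase hP h)]
  congr 1; ext ξ
  rw [FT_eq, ← integral_const_mul]
  congr 1; ext x
  rw [show -dot2 x (-(ξ.1 + ξ.2)) = dot2 (ξ.1 + ξ.2) x by unfold dot2; simp; ring]
  ring

lemma aestronglyMeasurable_phase {P : V2 × V2 → ℂ} (hP : Integrable P) :
    AEStronglyMeasurable (fun x : V2 => ∫ ξ, P ξ * ee (dot2 (ξ.1 + ξ.2) x)) volume := by
  have h1 : AEStronglyMeasurable (Function.uncurry fun (x : V2) (ξ : V2 × V2) =>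
      P ξ * ee (dot2 (ξ.1 + ξ.2) x)) (volume.prod volume) := by
    refine AEStronglyMeasurable.mul (hP.aestronglyMeasurable.comp_snd) ?_
    exact Continuous.aestronglyMeasurable (by fun_prop)
  exact h1.integral_prod_right'

/-- Boundedness of the trilinear form of `D` at the exponents `p`, `q`, `r`. -/
def LamBdd (D : Set (V2 × V2)) (p q r : ℝ) (C : ENNReal) : Prop :=
  ∀ f g h : SchwartzMap V2 ℂ, ‖Lam D f g h‖ₑ ≤
    C * (eLpNorm f (ENNReal.ofReal p) volume * (eLpNorm g (ENNReal.ofReal q) volume *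
      eLpNorm h (ENNReal.ofReal r) volume))

lemma integral_TD_mul {D : Set (V2 × V2)} (hD : MeasurableSet D) (f g h : SchwartzMap V2 ℂ) :
    AEStronglyMeasurable (TD D f g) volume ∧ ∫ x, TD D f g x * h x = Lam D f g h := by
  have hP := integrable_indicator_mul hD (integrable_FT_mul f g)
  have hTD : TD D f g = fun x => ∫ ξ : V2 × V2,
      (indicator D (fun _ => (1 : ℂ)) ξ * (FT f ξ.1 * FT g ξ.2)) * ee (dot2 (ξ.1 + ξ.2) x) := by
    ext x
    unfold TD ee
    congr 1; ext ξ
    push_cast; ring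
  rw [hTD]
  refine ⟨aestronglyMeasurable_phase hP, ?_⟩
  rw [integral_phase_mul hP]
  unfold Lam
  congr 1; ext ξ; ring

lemma lamBdd_of_TD {D : Set (V2 × V2)} (hD : MeasurableSet D) {p q r : ℝ} (hr : 1 < r)
    {C : ENNReal} (h : ∀ f g : SchwartzMap V2 ℂ,
      eLpNorm (TD D f g) (ENNReal.ofReal (r / (r - 1))) volume ≤
        C * (eLpNorm f (ENNReal.ofReal p) volume * eLpNorm g (ENNReal.ofReal q) volume)) :
    LamBdd D p q r C := by
  intro f g k
  obtain ⟨hm, hi⟩ := integral_TD_mul hD f g k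
  have hc : (r / (r - 1)).HolderConjugate r := by
    have := Real.HolderConjugate.conjExponent hr
    exact this.symm
  have : ENNReal.HolderTriple (ENNReal.ofReal (r / (r - 1))) (ENNReal.ofReal r) 1 := by
    have := hc.ennrealOfReal
    exact this
  calc ‖Lam D f g k‖ₑ ≤ eLpNorm (TD D f g • ⇑k) 1 volume := by
        rw [← hi, eLpNorm_one_eq_lintegral_enorm]
        exact enorm_integral_le_lintegral_enorm _
    _ ≤ eLpNorm (TD D f g) (ENNReal.ofReal (r / (r - 1))) volume *
          eLpNorm k (ENNReal.ofReal r) volume :=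
        eLpNorm_smul_le_mul_eLpNorm k.continuous.aestronglyMeasurable hm
    _ ≤ _ := by
        grw [h f g]
        simp only [mul_assoc, le_refl]

lemma LamBdd.swap {D : Set (V2 × V2)} {p q r : ℝ} {C : ENNReal} (h : LamBdd D p q r C) :
    LamBdd (Prod.swap ⁻¹' D) q p r C := by
  intro f g k
  have : Lam (Prod.swap ⁻¹' D) f g k = Lam D g f k := by
    unfold Lam
    have := (Measure.measurePreserving_swap (μ := (volume : Measure V2))
      (ν := (volume : Measure V2))).integral_comp
      MeasurableEquiv.prodComm.measurableEmbedding (fun ξ : V2 × V2 =>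
        indicator D (fun _ => (1 : ℂ)) ξ * (FT g ξ.1 * (FT f ξ.2 * FT k (-(ξ.1 + ξ.2)))))
    simp only [Measure.volume_eq_prod V2 V2] at this ⊢
    rw [← this]
    congr 1; ext ξ
    rw [show indicator (Prod.swap ⁻¹' D) (fun _ => (1 : ℂ)) ξ =
      indicator D (fun _ => (1 : ℂ)) ξ.swap from rfl, add_comm]
    simp only [Prod.fst_swap, Prod.snd_swap]
    ring
  rw [this]
  refine (h g f k).trans_eq ?_
  ring

/-- The involution of frequency space exchanging the first and third frequencies. -/
def rot : (V2 × V2) ≃L[ℝ] (V2 × V2) :=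
  ContinuousLinearEquiv.equivOfInverse
    ((-(ContinuousLinearMap.fst ℝ V2 V2 + ContinuousLinearMap.snd ℝ V2 V2)).prod
      (ContinuousLinearMap.snd ℝ V2 V2))
    ((-(ContinuousLinearMap.fst ℝ V2 V2 + ContinuousLinearMap.snd ℝ V2 V2)).prod
      (ContinuousLinearMap.snd ℝ V2 V2))
    (fun x => by simp) (fun x => by simp)

lemma rot_apply (x : V2 × V2) : rot x = (-(x.1 + x.2), x.2) := rfl

lemma measurePreserving_rot : MeasurePreserving rot := by
  have h1 : MeasurePreserving (fun z : V2 × V2 => (z.1, (-z.2) - z.1)) (volume.prod volume)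
      (volume.prod volume) := by
    refine MeasurePreserving.skew_product (g := fun x y : V2 => -y - x)
      (MeasurePreserving.id volume) (by fun_prop) (ae_of_all _ fun x => ?_)
    have := ((measurePreserving_sub_right (volume : Measure V2) x).comp
      (Measure.measurePreserving_neg (volume : Measure V2))).map_eq
    simpa [Function.comp_def] using this
  have h2 := (Measure.measurePreserving_swap (μ := (volume : Measure V2))
      (ν := (volume : Measure V2)))
  have h3 := (h2.comp h1).comp h2
  have h4 : ⇑rot = (Prod.swap ∘ fun z : V2 × V2 => (z.1, (-z.2) - z.1)) ∘ Prod.swap := by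
    ext x <;> simp [rot_apply] <;> ring
  rw [h4]
  exact h3

lemma LamBdd.rot {D : Set (V2 × V2)} {p q r : ℝ} {C : ENNReal} (h : LamBdd D p q r C) :
    LamBdd (rot ⁻¹' D) r q p C := by
  intro f g k
  have : Lam (_root_.rot ⁻¹' D) f g k = Lam D k g f := by
    unfold Lam
    have := measurePreserving_rot.integral_comp
      _root_.rot.toHomeomorph.toMeasurableEquiv.measurableEmbedding (fun ξ : V2 × V2 =>
        indicator D (fun _ => (1 : ℂ)) ξ * (FT k ξ.1 * (FT g ξ.2 * FT f (-(ξ.1 + ξ.2)))))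
    rw [← this]
    congr 1; ext ξ
    rw [show indicator (_root_.rot ⁻¹' D) (fun _ => (1 : ℂ)) ξ =
      indicator D (fun _ => (1 : ℂ)) (_root_.rot ξ) from rfl]
    simp only [rot_apply]
    rw [show -(-(ξ.1 + ξ.2) + ξ.2) = ξ.1 by abel]
    ring
  rw [this]
  refine (h k g f).trans_eq ?_
  ring

lemma LamBdd.comp {D : Set (V2 × V2)} {p q r : ℝ} (hp : 0 < p)
    (hq : 0 < q) (hr : 0 < r) (hs : p⁻¹ + q⁻¹ + r⁻¹ = 1) {C : ENNReal} (h : LamBdd D p q r C)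
    (A : V2 ≃L[ℝ] V2) (hA : ∀ x y, dot2 (A x) y = dot2 x (A y)) {c : ENNReal} (hc0 : c ≠ 0)
    (hc : c ≠ ⊤) (hAv : Measure.map A volume = c • (volume : Measure V2)) :
    LamBdd (Prod.map A A ⁻¹' D) p q r C := by
  intro f g k
  have hcr : c.toReal ≠ 0 := ENNReal.toReal_ne_zero.2 ⟨hc0, hc⟩
  have hme : MeasurableEmbedding A := A.toHomeomorph.toMeasurableEquiv.measurableEmbedding
  have hI : ∀ F : V2 → ℂ, ∫ x, F (A x) = c.toReal * ∫ x, F x := by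
    intro F
    rw [← hme.integral_map, hAv, integral_smul_measure]
    simp
  have hFT : ∀ (F : V2 → ℂ) ξ, FT (F ∘ A) (A ξ) = c.toReal * FT F ξ := by
    intro F ξ
    rw [FT_eq, FT_eq, ← hI]
    congr 1; ext x; simp [hA]
  have hme2 : MeasurableEmbedding (Prod.map A A) :=
    (A.prodCongr A).toHomeomorph.toMeasurableEquiv.measurableEmbedding
  have hmap2 : Measure.map (Prod.map A A) (volume : Measure (V2 × V2)) =
      (c * c) • (volume : Measure (V2 × V2)) := by
    rw [Measure.volume_eq_prod, ← Measure.map_prod_map _ _ hme.measurable hme.measurable, hAv]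
    rw [Measure.prod_smul_left, Measure.prod_smul_right, smul_smul]
  have hI2 : ∀ F : V2 × V2 → ℂ, ∫ x, F (Prod.map A A x) = (c.toReal) ^ 2 * ∫ x, F x := by
    intro F
    rw [← hme2.integral_map, hmap2, integral_smul_measure, ENNReal.toReal_mul]
    simp [pow_two]
  have hN : ∀ (F : SchwartzMap V2 ℂ) (s : ℝ), 0 < s → eLpNorm (F ∘ A) (ENNReal.ofReal s) volume =
      c ^ s⁻¹ * eLpNorm F (ENNReal.ofReal s) volume := by
    intro F s hs
    rw [← eLpNorm_map_measure F.continuous.aestronglyMeasurable hme.measurable.aemeasurable, hAv,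
      eLpNorm_smul_measure_of_ne_top ENNReal.ofReal_ne_top, smul_eq_mul, one_div,
      ENNReal.toReal_inv, ENNReal.toReal_ofReal hs.le]
  let co (F : SchwartzMap V2 ℂ) : SchwartzMap V2 ℂ :=
    SchwartzMap.compCLMOfContinuousLinearEquiv ℝ A F
  have hco : ∀ F, ⇑(co F) = F ∘ A := fun F => rfl
  have hL : Lam D (co f) (co g) (co k) = c.toReal * Lam (Prod.map A A ⁻¹' D) f g k := by
    have : (c.toReal : ℂ) ^ 2 * Lam D (co f) (co g) (co k) =
        (c.toReal : ℂ) ^ 3 * Lam (Prod.map A A ⁻¹' D) f g k := by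
      unfold Lam
      rw [← hI2, ← integral_const_mul]
      congr 1; ext ξ
      simp only [hco, Prod.map_fst, Prod.map_snd, ← map_add, ← map_neg, hFT]
      rw [show indicator (Prod.map A A ⁻¹' D) (fun _ => (1 : ℂ)) ξ =
        indicator D (fun _ => (1 : ℂ)) (Prod.map A A ξ) from rfl]
      ring
    have h0 : (c.toReal : ℂ) ^ 2 ≠ 0 := by simpa using hcr
    apply mul_left_cancel₀ h0
    rw [this]; ring
  have := h (co f) (co g) (co k)
  rw [hL, hco, hco, hco, hN f p hp, hN g q hq, hN k r hr, enorm_mul] at this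
  have hce : ‖(c.toReal : ℂ)‖ₑ = c := by
    rw [← ofReal_norm]; simp [hc]
  have hcp : c ^ p⁻¹ * (c ^ q⁻¹ * c ^ r⁻¹) = c := by
    rw [← ENNReal.rpow_add _ _ hc0 hc, ← ENNReal.rpow_add _ _ hc0 hc, ← add_assoc, hs,
      ENNReal.rpow_one]
  rw [hce] at this
  refine (ENNReal.mul_le_mul_iff_right hc0 hc).1 (this.trans_eq ?_)
  conv_rhs => rw [← hcp]
  ring

lemma LamBdd.dilate {D : Set (V2 × V2)} {p q r : ℝ} (hp : 0 < p)
    (hq : 0 < q) (hr : 0 < r) (hs : p⁻¹ + q⁻¹ + r⁻¹ = 1) {C : ENNReal} (h : LamBdd D p q r C)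
    {R : ℝ} (hR : 0 < R) : LamBdd {ζ | R⁻¹ • ζ ∈ D} p q r C := by
  have h1 : R⁻¹ ≠ 0 := inv_ne_zero hR.ne'
  refine h.comp hp hq hr hs (ContinuousLinearEquiv.smulLeft (Units.mk0 R⁻¹ h1)) ?_
    ?_ ENNReal.ofReal_ne_top (Measure.map_addHaar_smul volume h1)
  · intro x y
    simp only [ContinuousLinearEquiv.smulLeft_apply_apply, Units.smul_def, Units.val_mk0]
    unfold dot2; simp; ring
  · simp [hR.ne']

lemma LamBdd.coordSwap {D : Set (V2 × V2)} {p q r : ℝ} (hp : 0 < p)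
    (hq : 0 < q) (hr : 0 < r) (hs : p⁻¹ + q⁻¹ + r⁻¹ = 1) {C : ENNReal} (h : LamBdd D p q r C) :
    LamBdd (Prod.map Prod.swap Prod.swap ⁻¹' D) p q r C := by
  refine h.comp hp hq hr hs (ContinuousLinearEquiv.prodComm ℝ ℝ ℝ) ?_ one_ne_zero
    ENNReal.one_ne_top ?_
  · intro x y
    simp [dot2]; ring
  · rw [one_smul]
    exact (Measure.measurePreserving_swap (μ := (volume : Measure ℝ))
      (ν := (volume : Measure ℝ))).map_eq

/-- A continuous approximation of the indicator function of the positive half-line. -/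
def stepApprox (a b : ℝ) (s : ℝ) : ℂ :=
  indicator (Ioi 0) (fun s => ((Real.exp (-(a * s)) - Real.exp (-(b * s)) : ℝ) : ℂ)) s

/-- The Fourier transform of `stepApprox a b`. -/
def stepKernel (a b : ℝ) (t : ℝ) : ℂ :=
  (a + 2 * Real.pi * t * Complex.I)⁻¹ - (b + 2 * Real.pi * t * Complex.I)⁻¹

lemma norm_stepApprox_le {a b : ℝ} (ha : 0 < a) (hb : 0 < b) (s : ℝ) : ‖stepApprox a b s‖ ≤ 1 := by
  unfold stepApprox
  by_cases hs : s ∈ Ioi (0 : ℝ)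
  · rw [indicator_of_mem hs, Complex.norm_real, Real.norm_eq_abs, abs_le]
    have h1 : Real.exp (-(a * s)) ≤ 1 := Real.exp_le_one_iff.2 (by have := mul_pos ha hs; linarith)
    have h2 : Real.exp (-(b * s)) ≤ 1 := Real.exp_le_one_iff.2 (by have := mul_pos hb hs; linarith)
    have h3 := Real.exp_pos (-(a * s))
    have h4 := Real.exp_pos (-(b * s))
    constructor <;> linarith
  · simp [indicator_of_notMem hs]

lemma continuous_stepApprox (a b : ℝ) : Continuous (stepApprox a b) := by
  have : stepApprox a b = fun s =>
      ((Real.exp (-(a * max s 0)) - Real.exp (-(b * max s 0)) : ℝ) : ℂ) := by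
    ext s
    unfold stepApprox
    by_cases hs : s ∈ Ioi (0 : ℝ)
    · rw [indicator_of_mem hs, max_eq_left (le_of_lt hs)]
    · rw [indicator_of_notMem hs, max_eq_right (not_lt.1 hs)]; simp
  rw [this]; fun_prop

lemma integrable_stepApprox {a b : ℝ} (ha : 0 < a) (hb : 0 < b) : Integrable (stepApprox a b) := by
  unfold stepApprox
  rw [integrable_indicator_iff measurableSet_Ioi]
  have h : ∀ c : ℝ, 0 < c → IntegrableOn (fun s : ℝ => Real.exp (-(c * s))) (Ioi 0) := by
    intro c hc
    simpa using integrableOn_exp_mul_Ioi (a := -c) (by linarith) 0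
  exact ((h a ha).sub (h b hb)).ofReal

lemma fourier_stepApprox {a b : ℝ} (ha : 0 < a) (hb : 0 < b) :
    FourierTransform.fourier (stepApprox a b) = stepKernel a b := by
  ext t
  rw [Real.fourier_real_eq_integral_exp_smul]
  have h1 : ∀ v : ℝ, Complex.exp (↑(-2 * Real.pi * v * t) * Complex.I) • stepApprox a b v =
      indicator (Ioi 0) (fun v : ℝ => Complex.exp (-(a + 2 * Real.pi * t * Complex.I) * v) -
        Complex.exp (-(b + 2 * Real.pi * t * Complex.I) * v)) v := by
    intro v
    unfold stepApprox
    by_cases hv : v ∈ Ioi (0 : ℝ)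
    · rw [indicator_of_mem hv, indicator_of_mem hv, smul_eq_mul]
      push_cast
      rw [mul_sub, ← Complex.exp_add, ← Complex.exp_add]
      congr 2 <;> ring
    · rw [indicator_of_notMem hv, indicator_of_notMem hv, smul_zero]
  simp_rw [h1]
  rw [integral_indicator measurableSet_Ioi]
  have hre : ∀ c : ℝ, 0 < c → (-(c + 2 * Real.pi * t * Complex.I : ℂ)).re < 0 := by
    intro c hc; simp [hc]
  rw [integral_sub (integrableOn_exp_mul_complex_Ioi (hre a ha) 0)
    (integrableOn_exp_mul_complex_Ioi (hre b hb) 0),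
    integral_exp_mul_complex_Ioi (hre a ha), integral_exp_mul_complex_Ioi (hre b hb)]
  unfold stepKernel
  simp only [Complex.ofReal_zero, mul_zero, Complex.exp_zero, neg_div_neg_eq, one_div]

lemma norm_add_mul_I_ge (a t : ℝ) :
    ‖(a + 2 * Real.pi * t * Complex.I : ℂ)‖ = Real.sqrt (a ^ 2 + (2 * Real.pi * t) ^ 2) := by
  rw [← Complex.norm_add_mul_I]; push_cast; rfl

lemma integrable_stepKernel {a b : ℝ} (ha : 0 < a) (ha1 : a ≤ 1) (hb : 1 ≤ b) :
    Integrable (stepKernel a b) := by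
  have hne : ∀ c : ℝ, 0 < c → ∀ t : ℝ, (c + 2 * Real.pi * t * Complex.I : ℂ) ≠ 0 := by
    intro c hc t h
    have := congrArg Complex.re h
    simp at this; linarith
  have hcont : Continuous (stepKernel a b) := by
    unfold stepKernel
    refine Continuous.sub (Continuous.inv₀ (by fun_prop) (hne a ha))
      (Continuous.inv₀ (by fun_prop) (hne b (by linarith)))
  refine (integrable_inv_one_add_sq.const_mul ((b - a) / a)).mono'
    hcont.aestronglyMeasurable (ae_of_all _ fun t => ?_)
  unfold stepKernel
  rw [inv_sub_inv (hne a ha t) (hne b (by linarith) t), norm_div, norm_mul, norm_add_mul_I_ge,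
    norm_add_mul_I_ge]
  have h1 : ‖(b + 2 * Real.pi * t * Complex.I : ℂ) - (a + 2 * Real.pi * t * Complex.I)‖ = b - a := by
    rw [add_sub_add_right_eq_sub, ← Complex.ofReal_sub, Complex.norm_real, Real.norm_eq_abs,
      abs_of_nonneg (by linarith)]
  rw [h1]
  have hpi : t ^ 2 ≤ (2 * Real.pi * t) ^ 2 := by
    have h3 := Real.pi_gt_three
    have h4 : 1 ≤ (2 * Real.pi) ^ 2 := by nlinarith
    rw [mul_pow]; exact le_mul_of_one_le_left (sq_nonneg t) h4
  have h2 : a * Real.sqrt (1 + t ^ 2) ≤ Real.sqrt (a ^ 2 + (2 * Real.pi * t) ^ 2) := by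
    apply Real.le_sqrt_of_sq_le
    rw [mul_pow, Real.sq_sqrt (by positivity)]
    nlinarith [mul_le_mul_of_nonneg_right (pow_le_one₀ ha.le ha1 (n := 2)) (sq_nonneg t)]
  have h3 : Real.sqrt (1 + t ^ 2) ≤ Real.sqrt (b ^ 2 + (2 * Real.pi * t) ^ 2) := by
    apply Real.sqrt_le_sqrt
    nlinarith
  have h4 : a * (1 + t ^ 2) ≤ Real.sqrt (a ^ 2 + (2 * Real.pi * t) ^ 2) *
      Real.sqrt (b ^ 2 + (2 * Real.pi * t) ^ 2) := by
    calc a * (1 + t ^ 2) = (a * Real.sqrt (1 + t ^ 2)) * Real.sqrt (1 + t ^ 2) := by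
          rw [mul_assoc, Real.mul_self_sqrt (by positivity)]
      _ ≤ _ := by gcongr
  calc (b - a) / _ ≤ (b - a) / (a * (1 + t ^ 2)) := by
        apply div_le_div_of_nonneg_left (by linarith) (by positivity) h4
    _ = _ := by field_simp

lemma stepApprox_eq_integral {a b : ℝ} (ha : 0 < a) (ha1 : a ≤ 1) (hb : 1 ≤ b) (s : ℝ) :
    stepApprox a b s = ∫ t, stepKernel a b t * ee (t * s) := by
  have hb0 : 0 < b := by linarith
  have h := (continuous_stepApprox a b).fourierInv_fourier_eq (integrable_stepApprox ha hb0)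
    (by rw [fourier_stepApprox ha hb0]; exact integrable_stepKernel ha ha1 hb)
  rw [← congrFun h s, fourier_stepApprox ha hb0, Real.fourierInv_eq']
  congr 1; ext t
  rw [smul_eq_mul, mul_comm, ee]
  congr 4
  simp; ring

lemma norm_stepKernel_le {a b t : ℝ} (ht : 1 ≤ |t|) : ‖stepKernel a b t‖ ≤ 2 := by
  have h : ∀ c : ℝ, ‖(c + 2 * Real.pi * t * Complex.I : ℂ)⁻¹‖ ≤ 1 := by
    intro c
    rw [norm_inv, norm_add_mul_I_ge]
    apply inv_le_one_of_one_le₀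
    apply Real.le_sqrt_of_sq_le
    have := Real.pi_gt_three
    have h2 : 1 ≤ t ^ 2 := by rw [← sq_abs]; nlinarith
    rw [mul_pow]; nlinarith [sq_nonneg c]
  unfold stepKernel
  refine (norm_sub_le _ _).trans ?_
  linarith [h a, h b]

lemma tendsto_stepKernel {t : ℝ} (ht : t ≠ 0) :
    Tendsto (fun n : ℕ => stepKernel (1 / ((n : ℝ) + 1)) (n + 1) t) atTop
      (𝓝 (2 * Real.pi * t * Complex.I)⁻¹) := by
  unfold stepKernel
  have h1 : Tendsto (fun n : ℕ => (1 / ((n : ℝ) + 1))) atTop (𝓝 0) :=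
    tendsto_one_div_add_atTop_nhds_zero_nat
  have hne : (2 * Real.pi * t * Complex.I : ℂ) ≠ 0 := by
    simp [ht, Real.pi_ne_zero]
  have h2 : Tendsto (fun n : ℕ => (((1 / ((n : ℝ) + 1) : ℝ) : ℂ) + 2 * Real.pi * t * Complex.I)⁻¹)
      atTop (𝓝 (2 * Real.pi * t * Complex.I)⁻¹) := by
    have := ((Complex.continuous_ofReal.tendsto 0).comp h1).add_const
      (2 * Real.pi * t * Complex.I : ℂ)
    simp only [Complex.ofReal_zero, zero_add] at this
    exact this.inv₀ hne
  have h3 : Tendsto (fun n : ℕ => ((((n : ℝ) + 1 : ℝ) : ℂ) + 2 * Real.pi * t * Complex.I)⁻¹)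
      atTop (𝓝 0) := by
    rw [tendsto_zero_iff_norm_tendsto_zero]
    refine squeeze_zero (fun _ => norm_nonneg _) (fun n => ?_) h1
    rw [norm_inv, norm_add_mul_I_ge, one_div]
    gcongr
    apply Real.le_sqrt_of_sq_le
    nlinarith [sq_nonneg (2 * Real.pi * t)]
  simpa using h2.sub h3

lemma tendsto_stepApprox (s : ℝ) :
    Tendsto (fun n : ℕ => stepApprox (1 / ((n : ℝ) + 1)) (n + 1) s) atTop
      (𝓝 (indicator (Ioi 0) (fun _ => (1 : ℂ)) s)) := by
  unfold stepApprox
  by_cases hs : s ∈ Ioi (0 : ℝ)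
  · simp only [indicator_of_mem hs]
    have h1 : Tendsto (fun n : ℕ => Real.exp (-((1 / ((n : ℝ) + 1)) * s))) atTop (𝓝 1) := by
      have := (tendsto_one_div_add_atTop_nhds_zero_nat (𝕜 := ℝ)).mul_const s
      have := (Real.continuous_exp.tendsto _).comp this.neg
      simpa [Function.comp_def] using this
    have h2 : Tendsto (fun n : ℕ => Real.exp (-(((n : ℝ) + 1) * s))) atTop (𝓝 0) := by
      refine Real.tendsto_exp_neg_atTop_nhds_zero.comp ?_
      refine Tendsto.atTop_mul_const hs ?_
      exact tendsto_atTop_add_const_right _ _ tendsto_natCast_atTop_atTop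
    have := (Complex.continuous_ofReal.tendsto _).comp (h1.sub h2)
    simpa [Function.comp_def] using this
  · simp only [indicator_of_notMem hs]; exact tendsto_const_nhds

/-- The mass of a complex density on the positive half-line, in terms of its characteristic
function, when the latter is supported in a compact set away from the origin. -/
theorem integral_halfline {X : Type*} [MeasurableSpace X] {μ : Measure X} [SFinite μ] {Q : X → ℂ}
    (hQ : Integrable Q μ) {s : X → ℝ} (hs : Measurable s) {N : ℝ}
    (hF : ∀ t : ℝ, ¬ (1 ≤ |t| ∧ |t| ≤ N) → ∫ x, Q x * ee (t * s x) ∂μ = 0) :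
    ∫ x, indicator (Ioi 0) (fun _ => (1 : ℂ)) (s x) * Q x ∂μ =
      ∫ t : ℝ, (2 * Real.pi * t * Complex.I)⁻¹ * ∫ x, Q x * ee (t * s x) ∂μ := by
  set F : ℝ → ℂ := fun t => ∫ x, Q x * ee (t * s x) ∂μ with hFdef
  have hu : AEStronglyMeasurable (Function.uncurry fun (t : ℝ) (x : X) => Q x * ee (t * s x))
      (volume.prod μ) := by
    refine hQ.aestronglyMeasurable.comp_snd.mul ?_
    have : Measurable fun z : ℝ × X => ee (z.1 * s z.2) :=
      continuous_ee.measurable.comp (measurable_fst.mul (hs.comp measurable_snd))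
    exact this.aestronglyMeasurable
  have hFm : AEStronglyMeasurable F volume := hu.integral_prod_right'
  have hFb : ∀ t, ‖F t‖ ≤ ∫ x, ‖Q x‖ ∂μ := by
    intro t
    refine (norm_integral_le_integral_norm _).trans_eq ?_
    simp [norm_ee]
  have hab : ∀ n : ℕ, 0 < 1 / ((n : ℝ) + 1) ∧ 1 / ((n : ℝ) + 1) ≤ 1 ∧ 1 ≤ (n : ℝ) + 1 := by
    intro n
    refine ⟨by positivity, ?_, by linarith [n.cast_nonneg (α := ℝ)]⟩
    rw [div_le_one (by positivity)]; linarith [n.cast_nonneg (α := ℝ)]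
  have hid : ∀ n : ℕ, ∫ x, stepApprox (1 / ((n : ℝ) + 1)) (n + 1) (s x) * Q x ∂μ =
      ∫ t, stepKernel (1 / ((n : ℝ) + 1)) (n + 1) t * F t := by
    intro n
    obtain ⟨h1, h2, h3⟩ := hab n
    have hk := integrable_stepKernel h1 h2 h3
    simp_rw [stepApprox_eq_integral h1 h2 h3, hFdef, ← integral_mul_const, ← integral_const_mul]
    rw [integral_integral_swap]
    · congr 1; ext t; congr 1; ext x; ring
    · have h4 := (hk.mul_prod hQ).swap
      have h5 : AEStronglyMeasurable (fun z : X × ℝ => ee (z.2 * s z.1)) (μ.prod volume) := by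
        have : Measurable fun z : X × ℝ => ee (z.2 * s z.1) :=
          continuous_ee.measurable.comp (measurable_snd.mul (hs.comp measurable_fst))
        exact this.aestronglyMeasurable
      refine (h4.bdd_mul (c := 1) h5 (ae_of_all _ fun z => by simp [norm_ee])).congr
        (ae_of_all _ fun z => ?_)
      simp only [Function.uncurry, Function.comp, Prod.swap]; ring
  have hl1 : Tendsto (fun n : ℕ => ∫ x, stepApprox (1 / ((n : ℝ) + 1)) (n + 1) (s x) * Q x ∂μ)
      atTop (𝓝 (∫ x, indicator (Ioi 0) (fun _ => (1 : ℂ)) (s x) * Q x ∂μ)) := by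
    refine tendsto_integral_of_dominated_convergence (fun x => ‖Q x‖) (fun n => ?_) hQ.norm
      (fun n => ae_of_all _ fun x => ?_) (ae_of_all _ fun x => (tendsto_stepApprox _).mul_const _)
    · exact ((continuous_stepApprox _ _).measurable.comp hs).aestronglyMeasurable.mul
        hQ.aestronglyMeasurable
    · obtain ⟨h1, h2, h3⟩ := hab n
      rw [norm_mul]
      exact mul_le_of_le_one_left (norm_nonneg _) (norm_stepApprox_le h1 (by linarith) _)
  have hl2 : Tendsto (fun n : ℕ => ∫ t, stepKernel (1 / ((n : ℝ) + 1)) (n + 1) t * F t)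
      atTop (𝓝 (∫ t : ℝ, (2 * Real.pi * t * Complex.I)⁻¹ * F t)) := by
    refine tendsto_integral_of_dominated_convergence
      (indicator (Icc (-N) N) fun _ => 2 * ∫ x, ‖Q x‖ ∂μ) (fun n => ?_) ?_
      (fun n => ae_of_all _ fun t => ?_) (ae_of_all _ fun t => ?_)
    · obtain ⟨h1, h2, h3⟩ := hab n
      exact (integrable_stepKernel h1 h2 h3).aestronglyMeasurable.mul hFm
    · rw [integrable_indicator_iff measurableSet_Icc]
      exact integrableOn_const (by simp)
    · by_cases ht : 1 ≤ |t| ∧ |t| ≤ N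
      · rw [indicator_of_mem (show t ∈ Icc (-N) N from abs_le.1 ht.2), norm_mul]
        exact mul_le_mul (norm_stepKernel_le ht.1) (hFb t) (norm_nonneg _) (by norm_num)
      · rw [show F t = 0 from hF t ht, mul_zero, norm_zero]
        exact indicator_nonneg (fun _ _ => by positivity) _
    · by_cases ht : t = 0
      · have : F t = 0 := hF t (by simp [ht])
        simp [this]
      · exact (tendsto_stepKernel ht).mul_const _
  simp_rw [hid] at hl1
  exact tendsto_nhds_unique hl1 hl2

/-- The characteristic function of the distribution of the phase `ξ·u + η·w`. -/
lemma integral_FT_triple_phase (f g h : SchwartzMap V2 ℂ) (u w : V2) (t : ℝ) :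
    ∫ ξ : V2 × V2, (FT f ξ.1 * (FT g ξ.2 * FT h (-(ξ.1 + ξ.2)))) *
      ee (t * (dot2 ξ.1 u + dot2 ξ.2 w)) = ∫ x, f (x + t • u) * (g (x + t • w) * h x) := by
  have hP : Integrable fun ξ : V2 × V2 => (FT f ξ.1 * FT g ξ.2) *
      ee (t * (dot2 ξ.1 u + dot2 ξ.2 w)) :=
    (integrable_FT_mul f g).mul_bdd (c := 1) (by fun_prop) (ae_of_all _ fun z => by simp [norm_ee])
  have h1 := integral_phase_mul hP h
  have h2 : ∫ ξ : V2 × V2, (FT f ξ.1 * (FT g ξ.2 * FT h (-(ξ.1 + ξ.2)))) *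
      ee (t * (dot2 ξ.1 u + dot2 ξ.2 w)) = ∫ ξ : V2 × V2, ((FT f ξ.1 * FT g ξ.2) *
      ee (t * (dot2 ξ.1 u + dot2 ξ.2 w))) * FT h (-(ξ.1 + ξ.2)) := by
    congr 1; ext ξ; ring
  rw [h2, ← h1]
  congr 1; ext x
  rw [← mul_assoc]
  congr 1
  rw [FT_inversion f, FT_inversion g, ← integral_prod_mul]
  simp only [Measure.volume_eq_prod V2 V2]
  congr 1; ext ξ
  have : ee (t * (dot2 ξ.1 u + dot2 ξ.2 w)) * ee (dot2 (ξ.1 + ξ.2) x) =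
      ee (dot2 ξ.1 (x + t • u)) * ee (dot2 ξ.2 (x + t • w)) := by
    rw [← ee_add, ← ee_add]; congr 1; unfold dot2; simp; ring
  calc _ = FT f ξ.1 * FT g ξ.2 * (ee (t * (dot2 ξ.1 u + dot2 ξ.2 w)) * ee (dot2 (ξ.1 + ξ.2) x)) := by
        ring
    _ = _ := by rw [this]; ring

lemma sum_signs_mul {ι : Type*} [Fintype ι] [DecidableEq ι] (i j : ι) :
    ∑ ε : ι → ℤˣ, (((ε i : ℤ) : ℂ) * ((ε j : ℤ) : ℂ)) =
      if i = j then (Fintype.card (ι → ℤˣ) : ℂ) else 0 := by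
  split_ifs with h
  · subst h
    have : ∀ ε : ι → ℤˣ, (((ε i : ℤ) : ℂ) * ((ε i : ℤ) : ℂ)) = 1 := by
      intro ε; rcases Int.units_eq_one_or (ε i) with h | h <;> simp [h]
    simp [this]
  · have key : ∑ ε : ι → ℤˣ, (((ε i : ℤ) : ℂ) * ((ε j : ℤ) : ℂ)) =
        ∑ ε : ι → ℤˣ, -(((ε i : ℤ) : ℂ) * ((ε j : ℤ) : ℂ)) := by
      refine Fintype.sum_equiv (Equiv.mulLeft (Pi.mulSingle i (-1 : ℤˣ))) _ _ fun ε => ?_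
      simp [Pi.mulSingle_eq_of_ne (Ne.symm h)]
    rw [Finset.sum_neg_distrib] at key
    exact self_eq_neg.1 key

lemma sum_signs_quadratic {ι : Type*} [Fintype ι] [DecidableEq ι] (a : ι → ι → ℂ) :
    ∑ ε : ι → ℤˣ, ∑ i, ∑ j, ((ε i : ℤ) : ℂ) * (((ε j : ℤ) : ℂ) * a i j) =
      Fintype.card (ι → ℤˣ) * ∑ i, a i i := by
  rw [Finset.sum_comm, Finset.mul_sum]
  refine Finset.sum_congr rfl fun i _ => ?_
  rw [Finset.sum_comm]
  have : ∀ j, ∑ ε : ι → ℤˣ, ((ε i : ℤ) : ℂ) * (((ε j : ℤ) : ℂ) * a i j) =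
      (if i = j then (Fintype.card (ι → ℤˣ) : ℂ) else 0) * a i j := by
    intro j
    rw [← sum_signs_mul, Finset.sum_mul]
    exact Finset.sum_congr rfl fun ε _ => by ring
  simp [this]

lemma sum_signs_normSq {ι : Type*} [Fintype ι] [DecidableEq ι] (z : ι → ℂ) :
    ∑ ε : ι → ℤˣ, ‖∑ i, ((ε i : ℤ) : ℂ) * z i‖ ^ 2 =
      Fintype.card (ι → ℤˣ) * ∑ i, ‖z i‖ ^ 2 := by
  have h := sum_signs_quadratic (fun i j => z i * (starRingEnd ℂ) (z j))
  have h2 : ∀ w : ℂ, ((‖w‖ ^ 2 : ℝ) : ℂ) = w * (starRingEnd ℂ) w := by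
    intro w; rw [Complex.mul_conj, Complex.normSq_eq_norm_sq]
  apply Complex.ofReal_injective
  simp only [Complex.ofReal_sum, Complex.ofReal_mul, h2, Complex.ofReal_natCast]
  rw [← h]
  refine Finset.sum_congr rfl fun ε _ => ?_
  rw [map_sum, Finset.sum_mul_sum]
  refine Finset.sum_congr rfl fun i _ => Finset.sum_congr rfl fun j _ => ?_
  simp only [map_mul, map_intCast]
  ring

/-- The signed sum of a family of Schwartz functions. -/
def signSum {ι : Type*} [Fintype ι] (ε : ι → ℤˣ) (g : ι → SchwartzMap V2 ℂ) : SchwartzMap V2 ℂ :=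
  ∑ i, ((ε i : ℤ) : ℂ) • g i

lemma signSum_apply {ι : Type*} [Fintype ι] (ε : ι → ℤˣ) (g : ι → SchwartzMap V2 ℂ) (x : V2) :
    signSum ε g x = ∑ i, ((ε i : ℤ) : ℂ) * g i x := by
  simp [signSum, sum_apply]

lemma sum_signs_Lam {ι : Type*} [Fintype ι] [DecidableEq ι] {D : Set (V2 × V2)}
    (hD : MeasurableSet D) (f : SchwartzMap V2 ℂ) (g h : ι → SchwartzMap V2 ℂ) :
    ∑ ε : ι → ℤˣ, Lam D f (signSum ε g) (signSum ε h) =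
      Fintype.card (ι → ℤˣ) * ∑ i, Lam D f (g i) (h i) := by
  rw [← sum_signs_quadratic (fun i j => Lam D f (g i) (h j))]
  refine Finset.sum_congr rfl fun ε _ => ?_
  rw [funext (signSum_apply ε g), funext (signSum_apply ε h), Lam_sum_sum _ hD]
  exact Finset.sum_congr rfl fun i _ => Finset.sum_congr rfl fun j _ => by ring

/-- Interpolating the `L^r` norm of a function supported in a set of small measure. -/
lemma eLpNorm_le_of_support {h : V2 → ℂ} (hm : AEStronglyMeasurable h volume) {E : Set V2}
    (hs : Function.support h ⊆ E) {r : ℝ} (hr : 0 < r) (hr2 : r < 2) :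
    eLpNorm h (ENNReal.ofReal r) volume ≤
      volume E ^ (1 / r - 1 / 2) * (1 + ∫⁻ x, ‖h x‖ₑ ^ (2 : ℝ)) := by
  rw [← eLpNorm_restrict_eq_of_support_subset hs]
  have h1 := eLpNorm_le_eLpNorm_mul_rpow_measure_univ (p := ENNReal.ofReal r) (q := 2)
    (μ := volume.restrict E) (by rw [← ENNReal.ofReal_ofNat]; exact ENNReal.ofReal_le_ofReal hr2.le)
    hm.restrict
  rw [Measure.restrict_apply_univ, ENNReal.toReal_ofReal hr.le, mul_comm] at h1
  refine h1.trans ?_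
  simp only [ENNReal.toReal_ofNat]
  gcongr
  rw [eLpNorm_restrict_eq_of_support_subset hs, eLpNorm_eq_lintegral_rpow_enorm_toReal (by simp) (by simp)]
  simp only [ENNReal.toReal_ofNat]
  rcases le_total (∫⁻ x, ‖h x‖ₑ ^ (2 : ℝ)) 1 with h2 | h2
  · exact (ENNReal.rpow_le_one h2 (by norm_num)).trans le_self_add
  · calc _ ≤ (∫⁻ x, ‖h x‖ₑ ^ (2 : ℝ)) ^ (1 : ℝ) := ENNReal.rpow_le_rpow_of_exponent_le h2 (by norm_num)
      _ ≤ _ := by rw [ENNReal.rpow_one]; exact le_add_self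

/-- The averaged (square function) consequence of boundedness of a trilinear form. -/
theorem LamBdd.sum_le {ι : Type*} [Fintype ι] [DecidableEq ι] {D : Set (V2 × V2)}
    (hD : MeasurableSet D) {p q r : ℝ} {C : ENNReal} (hB : LamBdd D p q r C)
    (hq : 0 < q) (hr : 0 < r) (hr2 : r < 2)
    (f : SchwartzMap V2 ℂ) (g h : ι → SchwartzMap V2 ℂ) {K E : Set V2}
    (hK : MeasurableSet K)
    (hg : ∀ x, ∑ i, ‖g i x‖ ≤ indicator K 1 x) (hh : ∀ i, Function.support (h i) ⊆ E) {M : ENNReal}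
    (hM : ∑ i, ∫⁻ x, ‖h i x‖ₑ ^ (2 : ℝ) ≤ M) :
    ‖∑ i, Lam D f (g i) (h i)‖ₑ ≤ C * (eLpNorm f (ENNReal.ofReal p) volume *
      (volume K ^ (1 / q) * (volume E ^ (1 / r - 1 / 2) * (1 + M)))) := by
  obtain ⟨N, hN⟩ : ∃ N : ℕ, N = Fintype.card (ι → ℤˣ) := ⟨_, rfl⟩
  have hN0 : N ≠ 0 := hN ▸ Fintype.card_ne_zero
  have hG : ∀ ε : ι → ℤˣ, eLpNorm (signSum ε g) (ENNReal.ofReal q) volume ≤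
      volume K ^ (1 / q) := by
    intro ε
    calc _ ≤ eLpNorm (indicator K fun _ => (1 : ℝ)) (ENNReal.ofReal q) volume := by
          refine eLpNorm_mono_real fun x => ?_
          refine le_trans ?_ (hg x)
          rw [signSum_apply]
          refine (norm_sum_le _ _).trans (Finset.sum_le_sum fun i _ => ?_)
          rcases Int.units_eq_one_or (ε i) with h | h <;> simp [h]
      _ ≤ _ := by
          rw [eLpNorm_indicator_const hK (by simpa using hq) (by simp), ENNReal.toReal_ofReal hq.le]
          simp
  have hH : ∀ ε : ι → ℤˣ, eLpNorm (signSum ε h) (ENNReal.ofReal r) volume ≤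
      volume E ^ (1 / r - 1 / 2) * (1 + ∫⁻ x, ‖∑ i, ((ε i : ℤ) : ℂ) * h i x‖ₑ ^ (2 : ℝ)) := by
    intro ε
    have := eLpNorm_le_of_support (E := E) (h := signSum ε h)
      (SchwartzMap.continuous _).aestronglyMeasurable ?_ hr hr2
    · simpa only [signSum_apply] using this
    · intro x hx
      by_contra hxE
      refine hx ?_
      have : ∀ i, h i x = 0 := fun i => by
        by_contra h0; exact hxE (hh i h0)
      simp [signSum_apply, this]
  have hintegral : ∑ ε : ι → ℤˣ, ∫⁻ x, ‖∑ i, ((ε i : ℤ) : ℂ) * h i x‖ₑ ^ (2 : ℝ) =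
      N * ∑ i, ∫⁻ x, ‖h i x‖ₑ ^ (2 : ℝ) := by
    have hmz : ∀ z : V2 → ℂ, Continuous z → Measurable fun x => ‖z x‖ₑ ^ (2 : ℝ) := fun z hz =>
      (hz.measurable.enorm).pow_const _
    rw [← lintegral_finsetSum _ (fun i _ => hmz _ (by fun_prop)), ← lintegral_finsetSum _
      (fun i _ => hmz _ (by fun_prop)), ← lintegral_const_mul _ (Finset.measurable_sum _
      fun i _ => hmz _ (by fun_prop))]
    congr 1; ext x
    have hx := sum_signs_normSq (fun i => h i x)
    have he : ∀ z : ℂ, ‖z‖ₑ ^ (2 : ℝ) = ENNReal.ofReal (‖z‖ ^ 2) := by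
      intro z
      rw [← ofReal_norm, ENNReal.ofReal_rpow_of_nonneg (norm_nonneg _) (by norm_num)]
      norm_cast
    simp only [he]
    rw [← ENNReal.ofReal_sum_of_nonneg (fun _ _ => by positivity), hx, ← hN,
      ENNReal.ofReal_mul (by positivity), ENNReal.ofReal_natCast,
      ENNReal.ofReal_sum_of_nonneg (fun _ _ => by positivity)]
  have hsum : (N : ENNReal) * ‖∑ i, Lam D f (g i) (h i)‖ₑ ≤
      ∑ ε : ι → ℤˣ, C * (eLpNorm f (ENNReal.ofReal p) volume * (volume K ^ (1 / q) *
        (volume E ^ (1 / r - 1 / 2) *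
          (1 + ∫⁻ x, ‖∑ i, ((ε i : ℤ) : ℂ) * h i x‖ₑ ^ (2 : ℝ))))) := by
    have : (N : ENNReal) * ‖∑ i, Lam D f (g i) (h i)‖ₑ =
        ‖∑ ε : ι → ℤˣ, Lam D f (signSum ε g) (signSum ε h)‖ₑ := by
      rw [sum_signs_Lam hD, enorm_mul, ← hN, ← ofReal_norm (N : ℂ), Complex.norm_natCast,
        ENNReal.ofReal_natCast]
    rw [this]
    refine (enorm_sum_le _ _).trans (Finset.sum_le_sum fun ε _ => (hB _ _ _).trans ?_)
    gcongr
    exacts [hG ε, hH ε]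
  have hcard : ∑ ε : ι → ℤˣ, (1 : ENNReal) = N := by simp [hN]
  simp only [← Finset.mul_sum, Finset.sum_add_distrib, hintegral, hcard] at hsum
  have hfin : (N : ENNReal) * ‖∑ i, Lam D f (g i) (h i)‖ₑ ≤ N * (C * (eLpNorm f (ENNReal.ofReal p)
      volume * (volume K ^ (1 / q) * (volume E ^ (1 / r - 1 / 2) * (1 + M))))) := by
    refine hsum.trans ?_
    have : (N : ENNReal) * (C * (eLpNorm f (ENNReal.ofReal p) volume * (volume K ^ (1 / q) *
        (volume E ^ (1 / r - 1 / 2) * (1 + M))))) = C * (eLpNorm f (ENNReal.ofReal p) volume *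
        (volume K ^ (1 / q) * (volume E ^ (1 / r - 1 / 2) * (N + N * M)))) := by ring
    rw [this]
    gcongr
  exact (ENNReal.mul_le_mul_iff_right (by exact_mod_cast hN0) (by simp)).1 hfin

/-- The dyadic weight `2^{-(i+1)}`. -/
def dyad (i : ℕ) : ℝ := (1 / 2) ^ (i + 1)

/-- The slope (in `[0, 1]`) attached to a set of binary digits. -/
def digitSlope (S : Finset ℕ) : ℝ := ∑ i ∈ S, dyad i

/-- The offset of the line attached to a set of binary digits. -/
def digitOffset (n : ℕ) (S : Finset ℕ) : ℝ := ∑ i ∈ S, dyad i * (i / n)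

/-- The line attached to a set of binary digits. -/
def digitLine (n : ℕ) (S : Finset ℕ) (x : ℝ) : ℝ := ∑ i ∈ S, dyad i * (x - i / n)

lemma digitLine_eq (n : ℕ) (S : Finset ℕ) (x : ℝ) : digitLine n S x = digitSlope S * x - digitOffset n S := by
  simp only [digitLine, digitSlope, digitOffset, mul_sub, Finset.sum_sub_distrib, Finset.sum_mul]

lemma dyad_pos (i : ℕ) : 0 < dyad i := by unfold dyad; positivity

lemma sum_dyad_Ico {k n : ℕ} (h : k ≤ n) :
    ∑ i ∈ Finset.Ico k n, dyad i = (1 / 2) ^ k - (1 / 2) ^ n := by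
  induction n, h using Nat.le_induction with
  | base => simp
  | succ n hn ih => rw [Finset.sum_Ico_succ_top hn, ih, dyad]; ring

lemma sum_dyad_mul_Ico {k n : ℕ} (h : k ≤ n) :
    ∑ i ∈ Finset.Ico k n, dyad i * ((i : ℝ) - k + 1) =
      2 * (1 / 2) ^ k - ((n : ℝ) - k + 2) * (1 / 2) ^ n := by
  induction n, h using Nat.le_induction with
  | base => simp
  | succ n hn ih => rw [Finset.sum_Ico_succ_top hn, ih, dyad]; push_cast; ring

lemma sum_dyad_le {S : Finset ℕ} {n : ℕ} (hS : S ⊆ Finset.range n) : digitSlope S ≤ 1 := by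
  calc digitSlope S ≤ ∑ i ∈ Finset.Ico 0 n, dyad i := by
        refine Finset.sum_le_sum_of_subset_of_nonneg ?_ fun i _ _ => (dyad_pos i).le
        exact fun i hi => Finset.mem_Ico.2 ⟨Nat.zero_le _, Finset.mem_range.1 (hS hi)⟩
    _ ≤ 1 := by
        rw [sum_dyad_Ico (Nat.zero_le n)]
        simp

lemma digitSlope_nonneg (S : Finset ℕ) : 0 ≤ digitSlope S := Finset.sum_nonneg fun i _ => (dyad_pos i).le

lemma abs_digitLine_le {S : Finset ℕ} {n : ℕ} (hS : S ⊆ Finset.range n) {x : ℝ} {M : ℝ}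
    (hx : 0 ≤ x) (hxM : x ≤ M) (hM : 1 ≤ M) : |digitLine n S x| ≤ M := by
  calc |digitLine n S x| ≤ ∑ i ∈ S, dyad i * M := by
        refine (Finset.abs_sum_le_sum_abs _ _).trans (Finset.sum_le_sum fun i hi => ?_)
        rw [abs_mul, abs_of_pos (dyad_pos i)]
        refine mul_le_mul_of_nonneg_left ?_ (dyad_pos i).le
        have hin : i < n := Finset.mem_range.1 (hS hi)
        have h1 : (i : ℝ) / n ≤ 1 := div_le_one_of_le₀ (by exact_mod_cast hin.le) (by positivity)
        have h0 : 0 ≤ (i : ℝ) / n := by positivity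
        rw [abs_le]; constructor <;> linarith
    _ = digitSlope S * M := by rw [← Finset.sum_mul]; rfl
    _ ≤ M := mul_le_of_le_one_left (by linarith) (sum_dyad_le hS)

/-- Subset sums of a superdecreasing sequence are separated. -/
lemma subset_sum_separated {c : ℕ → ℝ} {δ : ℝ} {n : ℕ} (hc : ∀ i, i < n → 0 ≤ c i)
    (hsup : ∀ i, i < n → δ + ∑ m ∈ Finset.Ico (i + 1) n, c m ≤ c i) {S S' : Finset ℕ}
    (hS : S ⊆ Finset.range n) (hS' : S' ⊆ Finset.range n) (hne : S ≠ S') :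
    δ ≤ |∑ i ∈ S, c i - ∑ i ∈ S', c i| := by
  have hD : (symmDiff S S').Nonempty := by
    rw [Finset.nonempty_iff_ne_empty]; intro h; exact hne (symmDiff_eq_bot.1 h)
  set i := (symmDiff S S').min' hD with hi
  have him := Finset.min'_mem _ hD
  rw [← hi] at him
  have hlt : ∀ m < i, (m ∈ S ↔ m ∈ S') := by
    intro m hm
    by_contra h
    have : m ∈ symmDiff S S' := by rw [Finset.mem_symmDiff]; tauto
    exact absurd (Finset.min'_le _ _ this) (not_le.2 hm)
  have main : ∀ T T' : Finset ℕ, T ⊆ Finset.range n → T' ⊆ Finset.range n → i ∈ T → i ∉ T' →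
      (∀ m < i, (m ∈ T ↔ m ∈ T')) → δ ≤ ∑ i ∈ T, c i - ∑ i ∈ T', c i := by
    intro T T' hT hT' h1 h2 h3
    have hin : i < n := Finset.mem_range.1 (hT h1)
    have hsub : T' ⊆ (T.erase i) ∪ Finset.Ico (i + 1) n := by
      intro m hm
      rcases lt_trichotomy m i with h | h | h
      · exact Finset.mem_union_left _ (Finset.mem_erase.2 ⟨h.ne, (h3 m h).2 hm⟩)
      · exact absurd (h ▸ hm) h2
      · exact Finset.mem_union_right _ (Finset.mem_Ico.2 ⟨h, Finset.mem_range.1 (hT' hm)⟩)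
    have hle : ∑ m ∈ T', c m ≤ ∑ m ∈ T.erase i, c m + ∑ m ∈ Finset.Ico (i + 1) n, c m := by
      refine (Finset.sum_le_sum_of_subset_of_nonneg hsub fun m hm _ => ?_).trans ?_
      · rcases Finset.mem_union.1 hm with h | h
        · exact hc m (Finset.mem_range.1 (hT (Finset.mem_of_mem_erase h)))
        · exact hc m (Finset.mem_Ico.1 h).2
      · rw [← Finset.sum_union_inter]
        refine le_add_of_nonneg_right (Finset.sum_nonneg fun m hm => ?_)
        exact hc m (Finset.mem_Ico.1 (Finset.mem_inter.1 hm).2).2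
    rw [← Finset.add_sum_erase T c h1]
    linarith [hsup i hin]
  rcases Finset.mem_symmDiff.1 him with h | h
  · exact (main S S' hS hS' h.1 h.2 hlt).trans (le_abs_self _)
  · rw [abs_sub_comm]
    exact (main S' S hS' hS h.1 h.2 fun m hm => (hlt m hm).symm).trans (le_abs_self _)

lemma digitLine_separated {n : ℕ} {S S' : Finset ℕ}
    (hS : S ⊆ Finset.range n) (hS' : S' ⊆ Finset.range n) (hne : S ≠ S') {x : ℝ} (hx : 2 ≤ x) :
    (1 / 2) ^ n ≤ |digitLine n S x - digitLine n S' x| := by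
  have hfrac : ∀ i : ℕ, i < n → (i : ℝ) / n ≤ 1 := fun i hi =>
    div_le_one_of_le₀ (by exact_mod_cast hi.le) (by positivity)
  refine subset_sum_separated (c := fun i => dyad i * (x - i / n)) ?_ ?_ hS hS' hne
  · intro i hi
    exact mul_nonneg (dyad_pos i).le (by linarith [hfrac i hi])
  · intro i hi
    have h1 : ∑ m ∈ Finset.Ico (i + 1) n, dyad m * (x - m / n) ≤
        ∑ m ∈ Finset.Ico (i + 1) n, dyad m * (x - i / n) := by
      refine Finset.sum_le_sum fun m hm => mul_le_mul_of_nonneg_left ?_ (dyad_pos m).le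
      have : (i : ℝ) ≤ m := by exact_mod_cast (Nat.le_of_succ_le (Finset.mem_Ico.1 hm).1)
      gcongr
    rw [← Finset.sum_mul, sum_dyad_Ico hi] at h1
    have h2 : (1 / 2 : ℝ) ^ n ≤ (1 / 2) ^ n * (x - i / n) :=
      le_mul_of_one_le_right (by positivity) (by linarith [hfrac i hi])
    rw [sub_mul, Nat.succ_eq_add_one] at h1
    simp only [dyad] at h1 ⊢
    linarith

lemma abs_digitLine_tail_le {n : ℕ} (hn : 0 < n) {S : Finset ℕ} (hS : S ⊆ Finset.range n) {x : ℝ}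
    {k : ℕ} (hk : (k : ℝ) ≤ n * x) (hk' : n * x ≤ k + 1) :
    |digitLine n S x - digitLine n (S.filter (· < k)) x| ≤ 2 * (1 / 2) ^ k / n := by
  have hn' : (0 : ℝ) < n := by exact_mod_cast hn
  have h1 : digitLine n S x - digitLine n (S.filter (· < k)) x = digitLine n (S.filter (¬ · < k)) x := by
    rw [sub_eq_iff_eq_add, add_comm]; exact (Finset.sum_filter_add_sum_filter_not _ _ _).symm
  rw [h1]
  have hsub : S.filter (¬ · < k) ⊆ Finset.Ico k n := by
    intro m hm
    rw [Finset.mem_filter] at hm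
    exact Finset.mem_Ico.2 ⟨not_lt.1 hm.2, Finset.mem_range.1 (hS hm.1)⟩
  calc |digitLine n (S.filter (¬ · < k)) x|
      ≤ ∑ i ∈ S.filter (¬ · < k), dyad i * (((i : ℝ) - k + 1) / n) := by
        refine (Finset.abs_sum_le_sum_abs _ _).trans (Finset.sum_le_sum fun i hi => ?_)
        rw [abs_mul, abs_of_pos (dyad_pos i)]
        refine mul_le_mul_of_nonneg_left ?_ (dyad_pos i).le
        have hki : (k : ℝ) ≤ i := by exact_mod_cast (Finset.mem_Ico.1 (hsub hi)).1
        have : x - i / n = (n * x - i) / n := by field_simp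
        rw [this, abs_div, abs_of_pos hn']
        gcongr
        rw [abs_le]; constructor <;> linarith
    _ ≤ ∑ i ∈ Finset.Ico k n, dyad i * (((i : ℝ) - k + 1) / n) := by
        refine Finset.sum_le_sum_of_subset_of_nonneg hsub fun i hi _ => ?_
        have hki : (k : ℝ) ≤ i := by exact_mod_cast (Finset.mem_Ico.1 hi).1
        exact mul_nonneg (dyad_pos i).le (div_nonneg (by linarith) hn'.le)
    _ = (∑ i ∈ Finset.Ico k n, dyad i * ((i : ℝ) - k + 1)) / n := by
        rw [Finset.sum_div]; exact Finset.sum_congr rfl fun i _ => by ring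
    _ ≤ _ := by
        rcases le_total k n with h | h
        · rw [sum_dyad_mul_Ico h]
          gcongr
          have : (k : ℝ) ≤ n := by exact_mod_cast h
          have h2 : 0 ≤ ((n : ℝ) - k + 2) * (1 / 2) ^ n := mul_nonneg (by linarith) (by positivity)
          linarith
        · rw [Finset.Ico_eq_empty_of_le h]; simp; positivity

/-- Near `x ∈ [0, 1/2]` the `2^n` tubes compress into a set of small measure. -/
lemma volume_digitLine_slice_le {n : ℕ} (hn : 0 < n) {α κ : ℝ} (hκ : 0 < κ) {x : ℝ} (hx : 0 ≤ x)
    (hx2 : x ≤ 1 / 2) :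
    volume {y : ℝ | ∃ S ∈ (Finset.range n).powerset,
      α * x + κ * digitLine n S x < y ∧ y < α * x + κ * digitLine n S x + κ * (1 / 2) ^ n} ≤
      ENNReal.ofReal (6 * κ / n) := by
  have hn' : (0 : ℝ) < n := by exact_mod_cast hn
  set k := ⌊(n : ℝ) * x⌋₊ with hkdef
  have hk : (k : ℝ) ≤ n * x := Nat.floor_le (by positivity)
  have hk' : n * x ≤ k + 1 := (Nat.lt_floor_add_one _).le
  set d : ℝ := 2 * (1 / 2) ^ k / n with hd
  have hsub : {y : ℝ | ∃ S ∈ (Finset.range n).powerset,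
      α * x + κ * digitLine n S x < y ∧ y < α * x + κ * digitLine n S x + κ * (1 / 2) ^ n} ⊆
      ⋃ T ∈ (Finset.range k).powerset, Icc (α * x + κ * (digitLine n T x - d))
        (α * x + κ * (digitLine n T x + d + (1 / 2) ^ n)) := by
    rintro y ⟨S, hS, h1, h2⟩
    have ht := abs_le.1 (abs_digitLine_tail_le hn (Finset.mem_powerset.1 hS) hk hk')
    rw [← hd] at ht
    refine mem_biUnion (x := S.filter (· < k)) ?_ ⟨?_, ?_⟩
    · rw [Finset.mem_coe, Finset.mem_powerset]
      intro m hm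
      exact Finset.mem_range.2 (Finset.mem_filter.1 hm).2
    · nlinarith
    · nlinarith
  have hpow : (2 : ℝ) ^ k * (1 / 2) ^ k = 1 := by rw [← mul_pow]; norm_num
  calc _ ≤ ∑ T ∈ (Finset.range k).powerset, volume (Icc (α * x + κ * (digitLine n T x - d))
        (α * x + κ * (digitLine n T x + d + (1 / 2) ^ n))) :=
        (measure_mono hsub).trans (measure_biUnion_finset_le _ _)
    _ = ∑ T ∈ (Finset.range k).powerset, ENNReal.ofReal (κ * (2 * d + (1 / 2) ^ n)) := by
        refine Finset.sum_congr rfl fun T _ => ?_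
        rw [Real.volume_Icc]; congr 1; ring
    _ = ENNReal.ofReal (2 ^ k * (κ * (2 * d + (1 / 2) ^ n))) := by
        rw [Finset.sum_const, Finset.card_powerset, Finset.card_range, nsmul_eq_mul,
          ENNReal.ofReal_mul (p := 2 ^ k) (by positivity)]
        congr 1
        rw [ENNReal.ofReal_pow (by norm_num)]; simp
    _ ≤ _ := by
        apply ENNReal.ofReal_le_ofReal
        have h1 : (2 : ℝ) ^ k * (κ * (2 * d + (1 / 2) ^ n)) =
            4 * κ / n + κ * (2 ^ k * (1 / 2) ^ n) := by
          rw [hd]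
          have : (2 : ℝ) ^ k * (κ * (2 * (2 * (1 / 2) ^ k / n))) =
            ((2 : ℝ) ^ k * (1 / 2) ^ k) * (4 * κ / n) := by ring
          rw [hpow, one_mul] at this
          rw [← this]; ring
        have hkn : 2 * (k : ℝ) ≤ n := by nlinarith
        have hkn' : k ≤ n := by
          have : (k : ℝ) ≤ n := by linarith [k.cast_nonneg (α := ℝ)]
          exact_mod_cast this
        have h2 : (2 : ℝ) ^ k * (1 / 2) ^ n ≤ 2 / n := by
          obtain ⟨m, hm⟩ := Nat.exists_eq_add_of_le hkn'
          have hnm : (n : ℝ) = k + m := by exact_mod_cast hm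
          rw [hm, pow_add, ← mul_assoc, hpow, one_mul]
          rw [← hm]
          have hm2 : (m : ℝ) ≤ 2 ^ m := by exact_mod_cast (Nat.lt_two_pow_self).le
          rw [le_div_iff₀ hn']
          have h3 : (2 : ℝ) ^ m * (1 / 2) ^ m = 1 := by rw [← mul_pow]; norm_num
          have h4 : (0 : ℝ) < (1 / 2) ^ m := by positivity
          nlinarith
        rw [h1]
        calc 4 * κ / n + κ * (2 ^ k * (1 / 2) ^ n) ≤ 4 * κ / n + κ * (2 / n) := by gcongr
          _ = _ := by ring

lemma exists_bump_Ioo {a b : ℝ} (hab : a < b) : ∃ ψ : ℝ → ℝ, ContDiff ℝ (⊤ : ℕ∞) ψ ∧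
    (∀ x, 0 ≤ ψ x) ∧ (∀ x, ψ x ≤ 1) ∧ Function.support ψ = Ioo a b := by
  let f : ContDiffBump ((a + b) / 2) := ⟨(b - a) / 4, (b - a) / 2, by linarith, by linarith⟩
  refine ⟨f, f.contDiff, fun x => f.nonneg, fun x => f.le_one, ?_⟩
  rw [f.support_eq, Real.ball_eq_Ioo]
  congr 1 <;> simp only [f] <;> ring

/-- A bump adapted to a thin tube of slope `s` and width `1 / c`. -/
def wave (A β : ℝ → ℝ) (c s b : ℝ) (z : V2) : ℂ :=
  ((A z.1 * β (c * (z.2 - s * z.1 + b)) : ℝ) : ℂ)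

lemma norm_wave_le {A β : ℝ → ℝ} (hA0 : ∀ x, 0 ≤ A x) (hA1 : ∀ x, A x ≤ 1) (hβ0 : ∀ x, 0 ≤ β x)
    (hβ1 : ∀ x, β x ≤ 1) (c s b : ℝ) (z : V2) : ‖wave A β c s b z‖ ≤ 1 := by
  rw [wave, Complex.norm_real, Real.norm_eq_abs, abs_of_nonneg (mul_nonneg (hA0 _) (hβ0 _))]
  exact mul_le_one₀ (hA1 _) (hβ0 _) (hβ1 _)

lemma wave_ne_zero {A β : ℝ → ℝ} {c s b : ℝ} {z : V2} (h : wave A β c s b z ≠ 0) :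
    z.1 ∈ Function.support A ∧ c * (z.2 - s * z.1 + b) ∈ Function.support β := by
  rw [wave, Ne, Complex.ofReal_eq_zero, mul_eq_zero, not_or] at h
  exact h

lemma exists_schwartz_wave {A β : ℝ → ℝ} (hA : ContDiff ℝ (⊤ : ℕ∞) A)
    (hβ : ContDiff ℝ (⊤ : ℕ∞) β) {a₁ a₂ : ℝ} (hAs : Function.support A = Ioo a₁ a₂)
    (hβs : Function.support β = Ioo 0 1) {c : ℝ} (hc : 0 < c) (s b : ℝ) :
    ∃ G : SchwartzMap V2 ℂ, ⇑G = wave A β c s b := by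
  have hcs : HasCompactSupport (wave A β c s b) := by
    obtain ⟨m, hm⟩ := (isCompact_Icc (a := a₁) (b := a₂)).bddBelow_image
      (f := fun x => s * x) (by fun_prop)
    obtain ⟨M, hM⟩ := (isCompact_Icc (a := a₁) (b := a₂)).bddAbove_image
      (f := fun x => s * x) (by fun_prop)
    refine HasCompactSupport.of_support_subset_isCompact
      ((isCompact_Icc (a := a₁) (b := a₂)).prod (isCompact_Icc (a := m - b) (b := M - b + 1 / c)))
      fun z hz => ?_
    obtain ⟨h1, h2⟩ := wave_ne_zero hz
    rw [hAs] at h1; rw [hβs] at h2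
    have hz1 : z.1 ∈ Icc a₁ a₂ := Ioo_subset_Icc_self h1
    have h3 := hm (mem_image_of_mem _ hz1)
    have h4 := hM (mem_image_of_mem _ hz1)
    have h5 : 0 < z.2 - s * z.1 + b := pos_of_mul_pos_right h2.1 hc.le
    have h6 : z.2 - s * z.1 + b < 1 / c := by rw [lt_div_iff₀ hc, mul_comm]; exact h2.2
    exact ⟨hz1, by constructor <;> linarith⟩
  have hsm : ContDiff ℝ (⊤ : ℕ∞) (wave A β c s b) := by
    unfold wave
    exact Complex.ofRealCLM.contDiff.comp ((hA.comp contDiff_fst).mul (hβ.comp (by fun_prop)))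
  exact ⟨hcs.toSchwartzMap hsm, rfl⟩

/-- The trilinear correlation of two parallel tubes along their common direction. -/
lemma integral_wave {A B β : ℝ → ℝ} (hA : Continuous A) (hB : ContDiff ℝ (⊤ : ℕ∞) B)
    (hβ : ContDiff ℝ (⊤ : ℕ∞) β) {a₁ a₂ : ℝ} (hBs : Function.support B = Ioo a₁ a₂)
    (hβs : Function.support β = Ioo 0 1) (hA0 : ∀ x, 0 ≤ A x) (hA1 : ∀ x, A x ≤ 1)
    (hβ0 : ∀ x, 0 ≤ β x) (hβ1 : ∀ x, β x ≤ 1) {c : ℝ} (hc : 0 < c) (s b : ℝ) {φ : V2 → ℂ} {u : V2}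
    {t : ℝ} (hφ : ∀ x : V2, A (x.1 + t) ≠ 0 → wave B β c s b x ≠ 0 → φ (x + t • u) = 1) :
    ∫ x : V2, φ (x + t • u) * (wave A β c s b (x + t • (1, s)) * wave B β c s b x) =
      ((c⁻¹ * (∫ y, β y ^ 2) * ∫ x, A (x + t) * B x : ℝ) : ℂ) := by
  have h1 : ∀ x : V2, φ (x + t • u) * (wave A β c s b (x + t • (1, s)) * wave B β c s b x) =
      ((A (x.1 + t) * B x.1 * β (c * (x.2 - s * x.1 + b)) ^ 2 : ℝ) : ℂ) := by
    intro x
    have h2 : wave A β c s b (x + t • (1, s)) * wave B β c s b x =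
      ((A (x.1 + t) * B x.1 * β (c * (x.2 - s * x.1 + b)) ^ 2 : ℝ) : ℂ) := by
      have : x.2 + t * s - s * (x.1 + t) + b = x.2 - s * x.1 + b := by ring
      simp only [wave, Prod.fst_add, Prod.snd_add, Prod.smul_fst, Prod.smul_snd, smul_eq_mul,
        mul_one, this]
      push_cast; ring
    by_cases h3 : A (x.1 + t) ≠ 0 ∧ wave B β c s b x ≠ 0
    · rw [hφ x h3.1 h3.2, one_mul, h2]
    · have h4 : A (x.1 + t) = 0 ∨ wave B β c s b x = 0 := by tauto
      rcases h4 with h4 | h4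
      · rw [h2, h4]; simp
      · rw [← h2, h4]; simp
  simp_rw [h1]
  rw [integral_complex_ofReal]
  congr 1
  have hintegral : Integrable fun x : V2 => A (x.1 + t) * B x.1 * β (c * (x.2 - s * x.1 + b)) ^ 2 := by
    obtain ⟨G, hG⟩ := exists_schwartz_wave hB hβ hBs hβs hc s b
    have h5 := G.integrable (μ := volume)
    rw [hG] at h5
    have h6 := h5.re
    have hβc := hβ.continuous
    have h7 := h6.bdd_mul (c := 1) (f := fun x : V2 => A (x.1 + t) * β (c * (x.2 - s * x.1 + b)))
      (by fun_prop) (ae_of_all _ fun x => by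
        rw [Real.norm_eq_abs, abs_of_nonneg (mul_nonneg (hA0 _) (hβ0 _))]
        exact mul_le_one₀ (hA1 _) (hβ0 _) (hβ1 _))
    refine h7.congr (ae_of_all _ fun x => ?_)
    simp only [wave, RCLike.re_to_complex, Complex.ofReal_re]
    ring
  rw [Measure.volume_eq_prod, integral_prod _ hintegral]
  have h8 : ∀ x : ℝ, ∫ y, A (x + t) * B x * β (c * (y - s * x + b)) ^ 2 =
      (A (x + t) * B x) * (c⁻¹ * ∫ y, β y ^ 2) := by
    intro x
    rw [integral_const_mul]
    congr 1
    have : ∀ y, β (c * (y - s * x + b)) ^ 2 = (fun v => β (c * v) ^ 2) (y + (b - s * x)) := by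
      intro y; simp only; congr 3; ring
    simp_rw [this]
    rw [integral_add_right_eq_self (fun v => β (c * v) ^ 2),
      Measure.integral_comp_mul_left (fun v => β v ^ 2), abs_of_pos (inv_pos.2 hc), smul_eq_mul]
  simp only [h8]
  rw [integral_mul_const]; ring

/-- The half-space multiplier with boundary conormal `(u, w)`. -/
def halfLam (u w : V2) (τ : ℝ) (f g h : V2 → ℂ) : ℂ :=
  ∫ ξ : V2 × V2, indicator (Ioi 0) (fun _ => (1 : ℂ)) (τ * (dot2 ξ.1 u + dot2 ξ.2 w)) *
    (FT f ξ.1 * (FT g ξ.2 * FT h (-(ξ.1 + ξ.2))))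

lemma halfLam_const_mul (u w : V2) (τ : ℝ) (f g h : V2 → ℂ) (a : ℂ) :
    halfLam u w τ f g (fun x => a * h x) = a * halfLam u w τ f g h := by
  unfold halfLam
  rw [← integral_const_mul]
  congr 1; ext ξ
  rw [FT_const_mul]; ring

lemma halfLam_eq (f g h : SchwartzMap V2 ℂ) (u w : V2) {τ : ℝ} (hτ : τ = 1 ∨ τ = -1)
    {G : ℝ → ℝ} {m N : ℝ} (hG : ∀ t, G t ≠ 0 → 1 ≤ t ∧ t ≤ N)
    (hF : ∀ t : ℝ, ∫ x, f (x + t • u) * (g (x + t • w) * h x) = ((m * G t : ℝ) : ℂ)) :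
    halfLam u w τ f g h = τ * m * ((2 * Real.pi * Complex.I)⁻¹ * ∫ t : ℝ, ((G t / t : ℝ) : ℂ)) := by
  have hQ := integrable_FT_triple f g h
  have hs : Measurable fun ξ : V2 × V2 => τ * (dot2 ξ.1 u + dot2 ξ.2 w) := by fun_prop
  have hFt : ∀ t : ℝ, ∫ ξ : V2 × V2, (FT f ξ.1 * (FT g ξ.2 * FT h (-(ξ.1 + ξ.2)))) *
      ee (t * (τ * (dot2 ξ.1 u + dot2 ξ.2 w))) = ((m * G (τ * t) : ℝ) : ℂ) := by
    intro t
    rw [← hF, ← integral_FT_triple_phase]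
    congr 1; ext ξ; congr 2; ring
  have hab : |τ| = 1 := by rcases hτ with h | h <;> simp [h]
  have := integral_halfline hQ hs (N := N) (fun t ht => by
    rw [hFt]
    by_contra h0
    have h1 : G (τ * t) ≠ 0 := by intro h2; simp [h2] at h0
    obtain ⟨h2, h3⟩ := hG _ h1
    have h4 : |t| = τ * t := by
      rw [← abs_of_nonneg (by linarith : 0 ≤ τ * t), abs_mul, hab, one_mul]
    exact ht ⟨by rw [h4]; exact h2, by rw [h4]; exact h3⟩)
  rw [halfLam, this]
  simp_rw [hFt]
  have h1 : ∀ t : ℝ, (2 * Real.pi * t * Complex.I)⁻¹ * ((m * G (τ * t) : ℝ) : ℂ) =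
      (fun t : ℝ => (m * (2 * Real.pi * Complex.I)⁻¹ * τ) * ((G t / t : ℝ) : ℂ)) (τ * t) := by
    intro t
    have hτ2 : (τ : ℂ) ^ 2 = 1 := by rcases hτ with h | h <;> simp [h]
    have hτ0 : (τ : ℂ) ≠ 0 := by intro h; simp [h] at hτ2
    by_cases ht : t = 0
    · simp [ht]
    · have ht' : (t : ℂ) ≠ 0 := by exact_mod_cast ht
      have : (Real.pi : ℂ) ≠ 0 := by exact_mod_cast Real.pi_ne_zero
      push_cast
      field_simp
  have h2 : ∀ H : ℝ → ℂ, ∫ t : ℝ, H (τ * t) = ∫ t, H t := by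
    intro H
    rw [Measure.integral_comp_mul_left, abs_inv, hab]; simp
  refine (integral_congr_ae (ae_of_all _ h1)).trans ((h2 (fun t : ℝ =>
    (m * (2 * Real.pi * Complex.I)⁻¹ * τ) * ((G t / t : ℝ) : ℂ))).trans ?_)
  rw [integral_const_mul]; ring

lemma exists_correlation_ne_zero {A B : ℝ → ℝ} (hA : Continuous A) (hB : Continuous B)
    (hA0 : ∀ x, 0 ≤ A x) (hB0 : ∀ x, 0 ≤ B x) (hAs : Function.support A = Ioo 2 3)
    (hBs : Function.support B = Ioo 0 (1 / 2)) :
    (∀ t, (∫ x, A (x + t) * B x) ≠ 0 → 1 ≤ t ∧ t ≤ 3) ∧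
      0 < ∫ t, (∫ x, A (x + t) * B x) / t := by
  have hA' : HasCompactSupport A :=
    HasCompactSupport.of_support_subset_isCompact isCompact_Icc (hAs.le.trans Ioo_subset_Icc_self)
  have hB' : HasCompactSupport B :=
    HasCompactSupport.of_support_subset_isCompact isCompact_Icc (hBs.le.trans Ioo_subset_Icc_self)
  have hAi := hA.integrable_of_hasCompactSupport (μ := volume) hA'
  have hBi := hB.integrable_of_hasCompactSupport (μ := volume) hB'
  have hsupp : ∀ t, (∫ x, A (x + t) * B x) ≠ 0 → 1 ≤ t ∧ t ≤ 3 := by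
    intro t ht
    by_contra h
    refine ht ?_
    rw [← integral_zero ℝ ℝ]
    congr 1; ext x
    by_contra h0
    rw [mul_eq_zero, not_or] at h0
    have h1 : x + t ∈ Ioo (2 : ℝ) 3 := hAs ▸ h0.1
    have h2 : x ∈ Ioo (0 : ℝ) (1 / 2) := hBs ▸ h0.2
    exact h ⟨by linarith [h1.1, h2.2], by linarith [h1.2, h2.1]⟩
  have hApos : 0 < ∫ x, A x :=
    hA.integral_pos_of_hasCompactSupport_nonneg_nonzero hA' hA0 (x := 5 / 2) (by
      have : (5 / 2 : ℝ) ∈ Function.support A := by rw [hAs]; constructor <;> norm_num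
      exact this)
  have hBpos : 0 < ∫ x, B x :=
    hB.integral_pos_of_hasCompactSupport_nonneg_nonzero hB' hB0 (x := 1 / 4) (by
      have : (1 / 4 : ℝ) ∈ Function.support B := by rw [hBs]; constructor <;> norm_num
      exact this)
  have hintegral2 : Integrable (fun z : ℝ × ℝ => A (z.2 + z.1) * B z.2) (volume.prod volume) := by
    have h := (hAi.mul_prod hBi)
    have h2 := (measurePreserving_add_prod (volume : Measure ℝ)
      (volume : Measure ℝ)).integrable_comp_of_integrable h
    simpa only [Function.comp_def, add_comm] using h2
  have htot : ∫ t, (∫ x, A (x + t) * B x) = (∫ x, A x) * ∫ x, B x := by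
    rw [integral_integral_swap hintegral2, mul_comm, ← integral_mul_const]
    congr 1; ext x
    rw [integral_mul_const, mul_comm]
    congr 1
    simpa [add_comm] using integral_add_right_eq_self A x
  have hGi : Integrable fun t => ∫ x, A (x + t) * B x := hintegral2.integral_prod_left
  refine ⟨hsupp, ?_⟩
  have hGnn : ∀ t, 0 ≤ ∫ x, A (x + t) * B x := fun t =>
    integral_nonneg fun x => mul_nonneg (hA0 _) (hB0 _)
  have hdiv : Integrable fun t => (∫ x, A (x + t) * B x) / t := by
    refine hGi.mono (hGi.aemeasurable.div aemeasurable_id).aestronglyMeasurable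
      (ae_of_all _ fun t => ?_)
    by_cases h : (∫ x, A (x + t) * B x) = 0
    · simp [h]
    · have := (hsupp t h).1
      rw [norm_div]
      exact div_le_self (norm_nonneg _) (this.trans (le_abs_self t))
  have hle : ∫ t, (∫ x, A (x + t) * B x) / 3 ≤ ∫ t, (∫ x, A (x + t) * B x) / t := by
    refine integral_mono (hGi.div_const 3) hdiv fun t => ?_
    by_cases h : (∫ x, A (x + t) * B x) = 0
    · simp [h]
    · obtain ⟨h1, h2⟩ := hsupp t h
      exact div_le_div_of_nonneg_left (hGnn t) (by linarith) h2
  rw [integral_div, htot] at hle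
  have : 0 < (∫ x, A x) * (∫ x, B x) / 3 := by positivity
  linarith

lemma tube_mem_iff {κ : ℝ} (hκ : 0 < κ) (α : ℝ) (n : ℕ) (S : Finset ℕ) (x y : ℝ) :
    2 ^ n / κ * (y - (α + κ * digitSlope S) * x + κ * digitOffset n S) ∈ Ioo (0 : ℝ) 1 ↔
      α * x + κ * digitLine n S x < y ∧ y < α * x + κ * digitLine n S x + κ * (1 / 2) ^ n := by
  have hc : (0 : ℝ) < 2 ^ n / κ := by positivity
  have h1 : y - (α + κ * digitSlope S) * x + κ * digitOffset n S =
      y - (α * x + κ * digitLine n S x) := by rw [digitLine_eq]; ring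
  have h2 : κ * (1 / 2) ^ n = 1 / (2 ^ n / κ) := by rw [one_div_pow]; field_simp
  rw [h1, h2, mem_Ioo, mul_pos_iff_of_pos_left hc, ← lt_div_iff₀' hc]
  constructor <;> rintro ⟨h3, h4⟩ <;> constructor <;> linarith

lemma volume_le_of_slices {E : Set V2} (hE : MeasurableSet E) (hs : ∀ z ∈ E, z.1 ∈ Ioo (0 : ℝ) (1 / 2))
    {m : ENNReal} (hm : ∀ x ∈ Ioo (0 : ℝ) (1 / 2), volume (Prod.mk x ⁻¹' E) ≤ m) : volume E ≤ m := by
  rw [Measure.volume_eq_prod, Measure.prod_apply hE]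
  calc _ ≤ ∫⁻ x, indicator (Ioo (0 : ℝ) (1 / 2)) (fun _ => m) x := by
        refine lintegral_mono fun x => ?_
        by_cases hx : x ∈ Ioo (0 : ℝ) (1 / 2)
        · rw [indicator_of_mem hx]; exact hm x hx
        · have : Prod.mk x ⁻¹' E = ∅ := by
            ext y; simp only [mem_preimage, mem_empty_iff_false, iff_false]
            exact fun h => hx (hs _ h)
          simp [this]
    _ = m * volume (Ioo (0 : ℝ) (1 / 2)) := lintegral_indicator_const measurableSet_Ioo m
    _ ≤ m * 1 := by
        gcongr
        rw [Real.volume_Ioo, ← ENNReal.ofReal_one]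
        exact ENNReal.ofReal_le_ofReal (by norm_num)
    _ = m := mul_one m

/-- The tube over `0 < x < 1/2` attached to a set of digits. -/
def tube (α κ : ℝ) (n : ℕ) (S : Finset ℕ) : Set V2 :=
  {z | z.1 ∈ Ioo (0 : ℝ) (1 / 2) ∧ (α * z.1 + κ * digitLine n S z.1 < z.2 ∧
    z.2 < α * z.1 + κ * digitLine n S z.1 + κ * (1 / 2) ^ n)}

lemma measurableSet_tube (α κ : ℝ) (n : ℕ) (S : Finset ℕ) : MeasurableSet (tube α κ n S) := by
  have h : Continuous (digitLine n S) := by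
    simp only [funext (digitLine_eq n S)]; fun_prop
  have h1 : Continuous fun z : V2 => α * z.1 + κ * digitLine n S z.1 := by fun_prop
  exact (measurable_fst measurableSet_Ioo).inter
    ((isOpen_lt h1 continuous_snd).inter
      (isOpen_lt continuous_snd (h1.add continuous_const))).measurableSet

lemma volume_tube_le (α κ : ℝ) (n : ℕ) (S : Finset ℕ) :
    volume (tube α κ n S) ≤ ENNReal.ofReal (κ * (1 / 2) ^ n) := by
  refine volume_le_of_slices (measurableSet_tube α κ n S) (fun z hz => hz.1) fun x _ => ?_
  refine (measure_mono (t := Ioo (α * x + κ * digitLine n S x)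
    (α * x + κ * digitLine n S x + κ * (1 / 2) ^ n)) fun y hy => hy.2).trans ?_
  rw [Real.volume_Ioo, add_sub_cancel_left]

lemma volume_iUnion_tube_le {n : ℕ} (hn : 0 < n) (α : ℝ) {κ : ℝ} (hκ : 0 < κ) :
    volume (⋃ S ∈ (Finset.range n).powerset, tube α κ n S) ≤ ENNReal.ofReal (6 * κ / n) := by
  refine volume_le_of_slices ?_ ?_ fun x hx => ?_
  · exact Finset.measurableSet_biUnion _ fun S _ => measurableSet_tube α κ n S
  · intro z hz
    simp only [mem_iUnion] at hz
    obtain ⟨S, _, h⟩ := hz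
    exact h.1
  · refine (measure_mono ?_).trans (volume_digitLine_slice_le hn hκ hx.1.le hx.2.le (α := α))
    intro y hy
    simp only [mem_preimage, mem_iUnion] at hy
    obtain ⟨S, hS, h⟩ := hy
    exact ⟨S, hS, h.2⟩

/-- Half-space multipliers with an interval of conormal slopes are not jointly bounded. -/
theorem halfLam_unbounded {α κ Ku : ℝ} (hκ : 0 < κ) {p q r : ℝ} {C : ENNReal} (hC : C ≠ ⊤)
    (hr : 0 < r) (hr2 : r < 2) (hq : 0 < q) (u : ℝ → V2) (τ : ℝ → ℝ)
    (hu : ∀ s ∈ Icc α (α + κ), ‖u s‖ ≤ Ku) (hτ : ∀ s ∈ Icc α (α + κ), τ s = 1 ∨ τ s = -1)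
    (hB : ∀ (ι : Type) [Fintype ι] [DecidableEq ι] (s : ι → ℝ), (∀ i, s i ∈ Icc α (α + κ)) →
      ∀ (f : SchwartzMap V2 ℂ) (g h : ι → SchwartzMap V2 ℂ) (K E : Set V2), MeasurableSet K →
      (∀ x, ∑ i, ‖g i x‖ ≤ indicator K 1 x) → (∀ i, Function.support (h i) ⊆ E) →
      ∀ M : ENNReal, ∑ i, ∫⁻ x, ‖h i x‖ₑ ^ (2 : ℝ) ≤ M →
      ‖∑ i, halfLam (u (s i)) (1, s i) (τ (s i)) f (g i) (h i)‖ₑ ≤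
        C * (eLpNorm f (ENNReal.ofReal p) volume *
          (volume K ^ (1 / q) * (volume E ^ (1 / r - 1 / 2) * (1 + M))))) : False := by
  obtain ⟨A, hA, hA0, hA1, hAs⟩ := exists_bump_Ioo (show (2 : ℝ) < 3 by norm_num)
  obtain ⟨B, hBsm, hB0, hB1, hBs⟩ := exists_bump_Ioo (show (0 : ℝ) < 1 / 2 by norm_num)
  obtain ⟨β, hβ, hβ0, hβ1, hβs⟩ := exists_bump_Ioo (show (0 : ℝ) < 1 by norm_num)
  obtain ⟨hcsupp, hcpos⟩ := exists_correlation_ne_zero hA.continuous hBsm.continuous hA0 hB0 hAs hBs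
  set Z : ℂ := (∫ y, β y ^ 2 : ℝ) * ((2 * Real.pi * Complex.I)⁻¹ *
    ∫ t : ℝ, (((∫ x, A (x + t) * B x) / t : ℝ) : ℂ)) with hZ
  have hβpos : 0 < ∫ y, β y ^ 2 := by
    refine (hβ.continuous.pow 2).integral_pos_of_hasCompactSupport_nonneg_nonzero
      (HasCompactSupport.of_support_subset_isCompact (isCompact_Icc (a := (0 : ℝ)) (b := 1)) ?_)
      (fun y => sq_nonneg _) (x := 1 / 2) ?_
    · intro y hy
      have : y ∈ Function.support β := fun h => hy (by simp [h])
      rw [hβs] at this; exact Ioo_subset_Icc_self this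
    · have : (1 / 2 : ℝ) ∈ Function.support β := by rw [hβs]; constructor <;> norm_num
      exact pow_ne_zero 2 this
  have hZ0 : Z ≠ 0 := by
    rw [hZ, integral_complex_ofReal]
    refine mul_ne_zero (by exact_mod_cast hβpos.ne') (mul_ne_zero (inv_ne_zero ?_)
      (by exact_mod_cast hcpos.ne'))
    simp [Real.pi_ne_zero]
  set R : ℝ := 4 + |α| + 2 * κ + 3 * |Ku| with hR
  have hR0 : 0 < R := by positivity
  let φb : ContDiffBump (0 : V2) := ⟨R, R + 1, hR0, by linarith⟩
  obtain ⟨φ, hφ⟩ : ∃ φ : SchwartzMap V2 ℂ, ∀ x : V2, ‖x‖ ≤ R → φ x = 1 := by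
    have h1 : HasCompactSupport fun x : V2 => ((φb x : ℝ) : ℂ) :=
      φb.hasCompactSupport.comp_left Complex.ofReal_zero
    have h2 : ContDiff ℝ (⊤ : ℕ∞) fun x : V2 => ((φb x : ℝ) : ℂ) :=
      Complex.ofRealCLM.contDiff.comp φb.contDiff
    refine ⟨h1.toSchwartzMap h2, fun x hx => ?_⟩
    have : φb x = 1 := φb.one_of_mem_closedBall (by simpa using hx)
    change ((φb x : ℝ) : ℂ) = 1
    rw [this]; simp
  set K : Set V2 := Icc 2 3 ×ˢ Icc (-(3 * |α| + 4 * κ)) (3 * |α| + 4 * κ) with hK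
  have hKm : MeasurableSet K := measurableSet_Icc.prod measurableSet_Icc
  have hKfin : volume K ≠ ⊤ := (isCompact_Icc.prod isCompact_Icc).measure_lt_top.ne
  have main : ∀ n : ℕ, 0 < n → ‖(κ : ℂ) * Z‖ₑ ≤ C * (eLpNorm φ (ENNReal.ofReal p) volume *
      (volume K ^ (1 / q) * (ENNReal.ofReal (6 * κ / n) ^ (1 / r - 1 / 2) *
        (1 + ENNReal.ofReal κ)))) := by
    intro n hn
    set c : ℝ := 2 ^ n / κ with hc
    have hc0 : 0 < c := by positivity
    let ι : Type := {S // S ∈ (Finset.range n).powerset}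
    let s : ι → ℝ := fun S => α + κ * digitSlope S.1
    let b : ι → ℝ := fun S => κ * digitOffset n S.1
    have hS : ∀ S : ι, S.1 ⊆ Finset.range n := fun S => Finset.mem_powerset.1 S.2
    have hs : ∀ i, s i ∈ Icc α (α + κ) := by
      intro S
      have h1 := digitSlope_nonneg S.1
      have h2 := sum_dyad_le (hS S)
      constructor
      · simp only [s]; nlinarith
      · simp only [s]; nlinarith
    have hexg : ∀ i, ∃ G : SchwartzMap V2 ℂ, ⇑G = wave A β c (s i) (b i) := fun i =>
      exists_schwartz_wave hA hβ hAs hβs hc0 _ _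
    have hexh : ∀ i, ∃ G : SchwartzMap V2 ℂ, ⇑G = wave B β c (s i) (b i) := fun i =>
      exists_schwartz_wave hBsm hβ hBs hβs hc0 _ _
    choose g hg using hexg
    choose h' hh' using hexh
    let h : ι → SchwartzMap V2 ℂ := fun i => ((τ (s i) : ℝ) : ℂ) • h' i
    have hhx : ∀ i, ⇑(h i) = fun x => ((τ (s i) : ℝ) : ℂ) * wave B β c (s i) (b i) x := by
      intro i; ext x; simp [h, hh']
    have hsuppg : ∀ i z, g i z ≠ 0 → z.1 ∈ Ioo (2 : ℝ) 3 ∧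
        (α * z.1 + κ * digitLine n i.1 z.1 < z.2 ∧
          z.2 < α * z.1 + κ * digitLine n i.1 z.1 + κ * (1 / 2) ^ n) := by
      intro i z hz
      rw [hg i] at hz
      obtain ⟨h1, h2⟩ := wave_ne_zero hz
      rw [hAs] at h1; rw [hβs] at h2
      exact ⟨h1, (tube_mem_iff hκ α n i.1 z.1 z.2).1 h2⟩
    have hsupph : ∀ i z, wave B β c (s i) (b i) z ≠ 0 → z ∈ tube α κ n i.1 := by
      intro i z hz
      obtain ⟨h1, h2⟩ := wave_ne_zero hz
      rw [hBs] at h1; rw [hβs] at h2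
      exact ⟨h1, (tube_mem_iff hκ α n i.1 z.1 z.2).1 h2⟩
    have hpow1 : (1 / 2 : ℝ) ^ n ≤ 1 := pow_le_one₀ (by norm_num) (by norm_num)
    have hL : ∀ i, halfLam (u (s i)) (1, s i) (τ (s i)) φ (g i) (h i) = (c : ℂ)⁻¹ * Z := by
      intro i
      have hτi := hτ _ (hs i)
      have h1 := halfLam_eq φ (g i) (h' i) (u (s i)) (1, s i) hτi hcsupp
        (m := c⁻¹ * ∫ y, β y ^ 2) (fun t => by
          rw [hg i, hh' i]
          refine integral_wave hA.continuous hBsm hβ hBs hβs hA0 hA1 hβ0 hβ1 hc0 _ _ fun x h1 h2 => ?_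
          apply hφ
          have h3 : x.1 + t ∈ Ioo (2 : ℝ) 3 := hAs ▸ h1
          obtain ⟨h4, h5, h6⟩ := hsupph i x h2
          have h7 : |t| ≤ 3 := by
            rw [abs_le]; constructor <;> linarith [h3.1, h3.2, h4.1, h4.2]
          have h8 : ‖t • u (s i)‖ ≤ 3 * |Ku| := by
            rw [norm_smul, Real.norm_eq_abs]
            exact mul_le_mul h7 ((hu _ (hs i)).trans (le_abs_self _)) (norm_nonneg _) (by norm_num)
          have h9 : ‖x‖ ≤ 4 + |α| + 2 * κ := by
            rw [Prod.norm_def, max_le_iff, Real.norm_eq_abs, Real.norm_eq_abs]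
            have h10 := abs_le.1 (abs_digitLine_le (hS i) h4.1.le (by linarith [h4.2] : x.1 ≤ 1) le_rfl)
            have h11 : |α * x.1| ≤ |α| := by
              rw [abs_mul, abs_of_pos h4.1]
              exact mul_le_of_le_one_right (abs_nonneg _) (by linarith [h4.2])
            have h12 := abs_le.1 h11
            have h13 := abs_nonneg α
            constructor
            · rw [abs_of_pos h4.1]; linarith [h4.2]
            · rw [abs_le]; constructor <;> nlinarith
          exact (norm_add_le _ _).trans (by rw [hR]; linarith))
      rw [hhx i, ← hh' i, halfLam_const_mul, h1, hZ]
      have hτ2 : ((τ (s i) : ℝ) : ℂ) * ((τ (s i) : ℝ) : ℂ) = 1 := by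
        rcases hτi with h | h <;> simp [h]
      push_cast
      linear_combination ((c : ℂ)⁻¹ * (∫ y, β y ^ 2 : ℝ) * ((2 * Real.pi * Complex.I)⁻¹ *
        ∫ t : ℝ, (((∫ x, A (x + t) * B x) : ℝ) : ℂ) / t)) * hτ2
    have hcard : Fintype.card ι = 2 ^ n := by simp [ι]
    have hsum : ∑ i, halfLam (u (s i)) (1, s i) (τ (s i)) φ (g i) (h i) = κ * Z := by
      simp only [hL, Finset.sum_const, Finset.card_univ, hcard, nsmul_eq_mul, hc]
      have : (κ : ℂ) ≠ 0 := by exact_mod_cast hκ.ne'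
      push_cast
      field_simp
    have hgK : ∀ x, ∑ i, ‖g i x‖ ≤ indicator K 1 x := by
      intro x
      by_cases hex : ∃ i, g i x ≠ 0
      · obtain ⟨i, hi⟩ := hex
        obtain ⟨h1, h2, h3⟩ := hsuppg i x hi
        have hother : ∀ j ≠ i, g j x = 0 := by
          intro j hj
          by_contra h0
          obtain ⟨_, h4, h5⟩ := hsuppg j x h0
          have h6 := digitLine_separated (hS i) (hS j) (fun h => hj (Subtype.ext h.symm)) h1.1.le
          have h7 : |digitLine n i.1 x.1 - digitLine n j.1 x.1| < (1 / 2) ^ n := by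
            rw [abs_lt]; constructor <;> nlinarith
          linarith
        rw [Finset.sum_eq_single i (fun j _ hj => by rw [hother j hj, norm_zero]) (by simp)]
        have hxK : x ∈ K := by
          have h10 := abs_le.1 (abs_digitLine_le (hS i) (by linarith [h1.1] : 0 ≤ x.1) h1.2.le
            (by norm_num))
          have h11 : |α * x.1| ≤ 3 * |α| := by
            rw [abs_mul, abs_of_pos (by linarith [h1.1] : 0 < x.1), mul_comm]
            exact mul_le_mul_of_nonneg_right h1.2.le (abs_nonneg _)
          have h12 := abs_le.1 h11
          refine ⟨Ioo_subset_Icc_self h1, ?_, ?_⟩ <;> nlinarith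
        rw [indicator_of_mem hxK, hg i]
        exact norm_wave_le hA0 hA1 hβ0 hβ1 _ _ _ _
      · push Not at hex
        simp only [hex, norm_zero, Finset.sum_const_zero]
        exact indicator_nonneg (fun _ _ => zero_le_one) _
    have hhE : ∀ i, Function.support (h i) ⊆ ⋃ S ∈ (Finset.range n).powerset, tube α κ n S := by
      intro i z hz
      rw [Function.mem_support, hhx i] at hz
      exact mem_biUnion i.2 (hsupph i z (right_ne_zero_of_mul hz))
    have hM : ∑ i, ∫⁻ x, ‖h i x‖ₑ ^ (2 : ℝ) ≤ ENNReal.ofReal κ := by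
      have h1 : ∀ i, ∫⁻ x, ‖h i x‖ₑ ^ (2 : ℝ) ≤ ENNReal.ofReal (κ * (1 / 2) ^ n) := by
        intro i
        calc ∫⁻ x, ‖h i x‖ₑ ^ (2 : ℝ) ≤ ∫⁻ x, indicator (tube α κ n i.1) 1 x := by
              refine lintegral_mono fun x => ?_
              by_cases hx : wave B β c (s i) (b i) x = 0
              · rw [hhx i]; simp [hx]
              · rw [indicator_of_mem (hsupph i x hx)]
                refine ENNReal.rpow_le_one ?_ (by norm_num)
                rw [← ofReal_norm, ← ENNReal.ofReal_one]
                apply ENNReal.ofReal_le_ofReal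
                rw [hhx i, norm_mul]
                have : ‖((τ (s i) : ℝ) : ℂ)‖ = 1 := by
                  rcases hτ _ (hs i) with h | h <;> simp [h]
                rw [this, one_mul]
                exact norm_wave_le hB0 hB1 hβ0 hβ1 _ _ _ _
          _ = volume (tube α κ n i.1) := lintegral_indicator_one (measurableSet_tube _ _ _ _)
          _ ≤ _ := volume_tube_le _ _ _ _
      refine (Finset.sum_le_sum fun i _ => h1 i).trans_eq ?_
      rw [Finset.sum_const, Finset.card_univ, hcard, nsmul_eq_mul, ← ENNReal.ofReal_natCast,
        ← ENNReal.ofReal_mul (by positivity)]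
      congr 1
      push_cast
      rw [one_div_pow]; field_simp
    have := hB ι s hs φ g h K _ hKm hgK hhE _ hM
    rw [hsum] at this
    refine this.trans ?_
    have hexp : 0 ≤ 1 / r - 1 / 2 := by
      rw [sub_nonneg]; exact one_div_le_one_div_of_le hr hr2.le
    gcongr
    exact volume_iUnion_tube_le hn α hκ
  have hexp : 0 < 1 / r - 1 / 2 := by
    rw [sub_pos]; exact one_div_lt_one_div_of_lt hr hr2
  have hlim : Tendsto (fun n : ℕ => C * (eLpNorm φ (ENNReal.ofReal p) volume *
      (volume K ^ (1 / q) * (ENNReal.ofReal (6 * κ / n) ^ (1 / r - 1 / 2) *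
        (1 + ENNReal.ofReal κ))))) atTop (𝓝 0) := by
    have h1 : Tendsto (fun n : ℕ => ENNReal.ofReal (6 * κ / n)) atTop (𝓝 0) := by
      have := ENNReal.tendsto_ofReal (tendsto_const_div_atTop_nhds_zero_nat (6 * κ))
      simpa using this
    have h2 := ((ENNReal.continuous_rpow_const (y := 1 / r - 1 / 2)).tendsto 0).comp h1
    rw [ENNReal.zero_rpow_of_pos hexp] at h2
    have hφfin : eLpNorm φ (ENNReal.ofReal p) volume ≠ ⊤ := (φ.memLp _ _).2.ne
    have h3 : Tendsto (fun n : ℕ => (C * eLpNorm φ (ENNReal.ofReal p) volume *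
        volume K ^ (1 / q) * (1 + ENNReal.ofReal κ)) *
          ENNReal.ofReal (6 * κ / n) ^ (1 / r - 1 / 2)) atTop (𝓝 0) := by
      have := ENNReal.Tendsto.const_mul (a := C * eLpNorm φ (ENNReal.ofReal p) volume *
        volume K ^ (1 / q) * (1 + ENNReal.ofReal κ)) h2 (Or.inr ?_)
      · simpa using this
      · refine ENNReal.mul_ne_top (ENNReal.mul_ne_top (ENNReal.mul_ne_top hC hφfin) ?_) (by simp)
        exact ENNReal.rpow_ne_top_of_nonneg (by positivity) hKfin
    refine h3.congr fun n => ?_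
    ring
  have h0 : ‖(κ : ℂ) * Z‖ₑ ≤ 0 := by
    refine ge_of_tendsto hlim ?_
    filter_upwards [eventually_gt_atTop 0] with n hn using main n hn
  have : (κ : ℂ) * Z = 0 := by simpa using h0
  exact mul_ne_zero (by exact_mod_cast hκ.ne') hZ0 this

lemma hasTemperateGrowth_ee : Function.HasTemperateGrowth ee := by
  have hd : ∀ n : ℕ, iteratedDeriv n ee = fun t => (2 * Real.pi * Complex.I) ^ n * ee t := by
    intro n
    induction n with
    | zero => ext t; simp
    | succ n ih =>
      rw [iteratedDeriv_succ, ih]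
      ext t
      have h1 : HasDerivAt ee (ee t * (2 * Real.pi * Complex.I)) t := by
        have h2 : HasDerivAt (fun t : ℝ => ((2 * Real.pi * t : ℝ) : ℂ) * Complex.I)
            (((2 * Real.pi : ℝ) : ℂ) * Complex.I) t := by
          refine HasDerivAt.mul_const ?_ _
          simpa using ((hasDerivAt_id t).const_mul (2 * Real.pi)).ofReal_comp
        have h3 := h2.cexp
        change HasDerivAt ee (ee t * _) t at h3
        simpa using h3
      rw [(h1.const_mul _).deriv]; ring
  refine ⟨contDiff_ee, fun n => ⟨0, (2 * Real.pi) ^ n, fun t => ?_⟩⟩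
  rw [norm_iteratedFDeriv_eq_norm_iteratedDeriv, hd]
  simp [norm_ee, abs_of_pos Real.pi_pos]

lemma exists_modulate (a : V2) (f : SchwartzMap V2 ℂ) :
    ∃ G : SchwartzMap V2 ℂ, ⇑G = fun x => ee (dot2 x a) * f x := by
  have h1 : Function.HasTemperateGrowth fun x : V2 => dot2 x a := by
    have : (fun x : V2 => dot2 x a) =
        ⇑(a.1 • ContinuousLinearMap.fst ℝ ℝ ℝ + a.2 • ContinuousLinearMap.snd ℝ ℝ ℝ) := by
      ext x; simp [dot2]; ring
    rw [this]; exact ContinuousLinearMap.hasTemperateGrowth _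
  have h2 := hasTemperateGrowth_ee.comp h1
  refine ⟨SchwartzMap.smulLeftCLM ℂ (ee ∘ fun x : V2 => dot2 x a) f, ?_⟩
  ext x
  rw [SchwartzMap.smulLeftCLM_apply_apply h2]; rfl

/-- The blow-ups of `D` at `x₀` converge pointwise, off the boundary hyperplane, to the half space
with normal `τ (u, w)`. -/
def BlowsUpTo (D : Set (V2 × V2)) (x₀ : V2 × V2) (u w : V2) (τ : ℝ) : Prop :=
  ∀ x : V2 × V2, dot2 x.1 u + dot2 x.2 w ≠ 0 →
    ∀ᶠ R : ℝ in atTop, (x₀ + R⁻¹ • x ∈ D ↔ 0 < τ * (dot2 x.1 u + dot2 x.2 w))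

instance isAddHaarMeasure_volume_V2 : (volume : Measure V2).IsAddHaarMeasure :=
  inferInstanceAs ((volume : Measure ℝ).prod (volume : Measure ℝ)).IsAddHaarMeasure

instance isAddHaarMeasure_volume_V2_prod : (volume : Measure (V2 × V2)).IsAddHaarMeasure :=
  inferInstanceAs ((volume : Measure V2).prod (volume : Measure V2)).IsAddHaarMeasure

lemma ae_dot2_add_dot2_ne_zero (u : V2) {w : V2} (hw : w ≠ 0) :
    ∀ᵐ x : V2 × V2, dot2 x.1 u + dot2 x.2 w ≠ 0 := by
  let l : (V2 × V2) →ₗ[ℝ] ℝ :=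
    { toFun := fun x => dot2 x.1 u + dot2 x.2 w
      map_add' := fun x y => by simp only [dot2, Prod.fst_add, Prod.snd_add]; ring
      map_smul' := fun c x => by
        simp only [dot2, Prod.smul_fst, Prod.smul_snd, smul_eq_mul, RingHom.id_apply]; ring }
  have h : LinearMap.ker l ≠ ⊤ := by
    intro h
    have h1 : l ((0, 0), w) = 0 := by
      have : (((0, 0), w) : V2 × V2) ∈ LinearMap.ker l := h ▸ Submodule.mem_top
      exact this
    have h2 : w.1 * w.1 + w.2 * w.2 = 0 := by
      simpa [l, dot2] using h1
    apply hw
    ext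
    · simp; nlinarith [mul_self_nonneg w.1, mul_self_nonneg w.2]
    · simp; nlinarith [mul_self_nonneg w.1, mul_self_nonneg w.2]
  exact measure_eq_zero_iff_ae_notMem.1
    (Measure.addHaar_submodule (volume : Measure (V2 × V2)) (LinearMap.ker l) h)

lemma Lam_dilate_modulate (D : Set (V2 × V2)) {R : ℝ} (hR : R ≠ 0) (x₀ : V2 × V2) (f g h : V2 → ℂ) :
    Lam {ζ | R⁻¹ • ζ ∈ D} (fun x => ee (dot2 x (R • x₀.1)) * f x)
      (fun x => ee (dot2 x (R • x₀.2)) * g x)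
      (fun x => ee (dot2 x (-(R • x₀.1 + R • x₀.2))) * h x) =
    ∫ ξ : V2 × V2, indicator {ζ | x₀ + R⁻¹ • ζ ∈ D} (fun _ => (1 : ℂ)) ξ *
      (FT f ξ.1 * (FT g ξ.2 * FT h (-(ξ.1 + ξ.2)))) := by
  rw [← integral_sub_right_eq_self (μ := (volume : Measure (V2 × V2))) _ (R • x₀)]
  unfold Lam
  congr 1
  ext ξ
  have h1 : x₀ + R⁻¹ • (ξ - R • x₀) = R⁻¹ • ξ := by
    rw [smul_sub, inv_smul_smul₀ hR]; abel
  have h2 : indicator {ζ | x₀ + R⁻¹ • ζ ∈ D} (fun _ => (1 : ℂ)) (ξ - R • x₀) =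
      indicator {ζ | R⁻¹ • ζ ∈ D} (fun _ => (1 : ℂ)) ξ := by
    classical
    simp only [indicator, mem_ofPred_eq, h1]
  rw [h2, FT_modulate, FT_modulate, FT_modulate]
  simp only [Prod.fst_sub, Prod.snd_sub, Prod.smul_fst, Prod.smul_snd]
  congr 4
  abel

lemma tendsto_blowUp_integral {D : Set (V2 × V2)} (hD : MeasurableSet D) {x₀ : V2 × V2} {u w : V2}
    (hw : w ≠ 0) {τ : ℝ} (hb : BlowsUpTo D x₀ u w τ) (f g h : SchwartzMap V2 ℂ) :
    Tendsto (fun R : ℝ => ∫ ξ : V2 × V2, indicator {ζ | x₀ + R⁻¹ • ζ ∈ D} (fun _ => (1 : ℂ)) ξ *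
      (FT f ξ.1 * (FT g ξ.2 * FT h (-(ξ.1 + ξ.2))))) atTop (𝓝 (halfLam u w τ f g h)) := by
  have hm : ∀ R : ℝ, MeasurableSet {ζ : V2 × V2 | x₀ + R⁻¹ • ζ ∈ D} := fun R =>
    hD.preimage (by fun_prop)
  refine tendsto_integral_filter_of_dominated_convergence
    (fun ξ => ‖FT f ξ.1 * (FT g ξ.2 * FT h (-(ξ.1 + ξ.2)))‖) ?_ ?_
    (integrable_FT_triple f g h).norm ?_
  · exact Eventually.of_forall fun R =>
      (integrable_indicator_mul (hm R) (integrable_FT_triple f g h)).aestronglyMeasurable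
  · refine Eventually.of_forall fun R => ae_of_all _ fun ξ => ?_
    by_cases hx : ξ ∈ {ζ : V2 × V2 | x₀ + R⁻¹ • ζ ∈ D}
    · simp [hx]
    · rw [indicator_of_notMem hx]; simp only [zero_mul, norm_zero]; positivity
  · filter_upwards [ae_dot2_add_dot2_ne_zero u hw] with ξ hξ
    refine tendsto_const_nhds.congr' ?_
    filter_upwards [hb ξ hξ] with R hR
    congr 1
    simp only [indicator, mem_ofPred_eq, hR, mem_Ioi]

/-- A bounded trilinear form cannot have an interval of blow-up slopes in a slice. -/
theorem LamBdd.false_of_blowUps {D : Set (V2 × V2)} (hD : MeasurableSet D) {p q r : ℝ} (hp : 0 < p)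
    (hq : 0 < q) (hr : 0 < r) (hs : p⁻¹ + q⁻¹ + r⁻¹ = 1) (hr2 : r < 2) {C : ENNReal} (hC : C ≠ ⊤)
    (h : LamBdd D p q r C) (ξ₀ : V2) {α κ Ku : ℝ} (hκ : 0 < κ) (η u : ℝ → V2) (τ : ℝ → ℝ)
    (hu : ∀ s ∈ Icc α (α + κ), ‖u s‖ ≤ Ku) (hτ : ∀ s ∈ Icc α (α + κ), τ s = 1 ∨ τ s = -1)
    (hb : ∀ s ∈ Icc α (α + κ), BlowsUpTo D (ξ₀, η s) (u s) (1, s) (τ s)) : False := by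
  refine halfLam_unbounded hκ (p := p) hC hr hr2 hq u τ hu hτ ?_
  intro ι _ _ s hsI f g h' K E hK hg hh M hM
  have hlim := tendsto_finsetSum Finset.univ fun i _ => tendsto_blowUp_integral hD
    (w := (1, s i)) (fun h0 => one_ne_zero (congrArg Prod.fst h0)) (hb (s i) (hsI i)) f (g i) (h' i)
  refine le_of_tendsto hlim.enorm ?_
  filter_upwards [eventually_gt_atTop (0 : ℝ)] with R hR
  obtain ⟨F, hF⟩ := exists_modulate (R • ξ₀) f
  choose G hG using fun i => exists_modulate (R • η (s i)) (g i)
  choose H hH using fun i => exists_modulate (-(R • ξ₀ + R • η (s i))) (h' i)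
  have h1 := (h.dilate hp hq hr hs hR).sum_le (hD.preimage (by fun_prop)) hq hr hr2 F G H hK
    (fun x => by simpa [hG, norm_ee] using hg x) (E := E) (fun i => by
      intro x hx
      refine hh i fun h0 => hx ?_
      rw [hH]; simp [h0]) (M := M) (by
      refine le_trans (le_of_eq ?_) hM
      refine Finset.sum_congr rfl fun i _ => lintegral_congr fun x => ?_
      rw [hH, enorm_mul, ← ofReal_norm (ee _), norm_ee]; simp)
  have h2 : eLpNorm F (ENNReal.ofReal p) volume = eLpNorm f (ENNReal.ofReal p) volume :=
    eLpNorm_congr_norm_ae (ae_of_all _ fun x => by rw [hF]; simp [norm_ee])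
  rw [h2] at h1
  refine le_trans (le_of_eq ?_) h1
  congr 1
  refine Finset.sum_congr rfl fun i _ => ?_
  rw [hF, hG, hH]
  exact (Lam_dilate_modulate D hR.ne' (ξ₀, η (s i)) f (g i) (h' i)).symm

section Blowup

variable {E : Type*} [NormedAddCommGroup E] [NormedSpace ℝ E]

/-- The blow-ups of `D` at `q` converge, off the kernel of `L`, to a half space bounded by it. -/
def HalfSpaceBlowUp (D : Set E) (q : E) (L : E →L[ℝ] ℝ) : Prop :=
  ∃ σ : ℝ, (σ = 1 ∨ σ = -1) ∧
    ∀ x, L x ≠ 0 → ∀ᶠ R : ℝ in atTop, (q + R⁻¹ • x ∈ D ↔ 0 < σ * L x)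

lemma tendsto_add_inv_smul (q x : E) : Tendsto (fun R : ℝ => q + R⁻¹ • x) atTop (𝓝 q) := by
  simpa using (tendsto_const_nhds (x := q)).add
    ((tendsto_inv_atTop_zero (𝕜 := ℝ)).smul_const x)

lemma eventually_blowUp_pos {g : E → ℝ} {L : E →L[ℝ] ℝ} {q : E}
    (hg : HasFDerivAt g L q) (hq : g q = 0) {m M : ℝ} (hm : 0 < m) :
    ∀ᶠ R : ℝ in atTop, ∀ y : E, ‖y‖ ≤ M → (m ≤ L y → 0 < g (q + R⁻¹ • y)) ∧
      (L y ≤ -m → g (q + R⁻¹ • y) < 0) := by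
  set ε : ℝ := m / (2 * (|M| + 1)) with hε
  have hM : 0 ≤ |M| := abs_nonneg M
  have hε0 : 0 < ε := by positivity
  have h1 := hg.isLittleO.def hε0
  rw [Metric.eventually_nhds_iff] at h1
  obtain ⟨δ, hδ, h1⟩ := h1
  filter_upwards [eventually_gt_atTop (0 : ℝ), eventually_gt_atTop ((|M| + 1) / δ)] with R hR hR2 y hy
  have hyM : ‖y‖ ≤ |M| := hy.trans (le_abs_self M)
  have hRi : 0 < R⁻¹ := inv_pos.2 hR
  have hn : ‖R⁻¹ • y‖ = R⁻¹ * ‖y‖ := by rw [norm_smul, Real.norm_eq_abs, abs_of_pos hRi]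
  have h2 : dist (q + R⁻¹ • y) q < δ := by
    rw [dist_eq_norm, add_sub_cancel_left, hn, inv_mul_lt_iff₀ hR]
    rw [div_lt_iff₀ hδ] at hR2
    linarith
  have h3 := h1 h2
  rw [add_sub_cancel_left, hq, sub_zero, hn, map_smul, smul_eq_mul, Real.norm_eq_abs] at h3
  have h4 : ε * ‖y‖ ≤ m / 2 := by
    calc ε * ‖y‖ ≤ ε * (|M| + 1) := by gcongr; linarith
      _ = m / 2 := by rw [hε]; field_simp
  have h5 : ε * (R⁻¹ * ‖y‖) ≤ R⁻¹ * (m / 2) := by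
    calc ε * (R⁻¹ * ‖y‖) = R⁻¹ * (ε * ‖y‖) := by ring
      _ ≤ _ := by gcongr
  have h6 := abs_le.1 (h3.trans h5)
  have h7 : 0 < R⁻¹ * m := by positivity
  constructor
  · intro h8
    have := mul_le_mul_of_nonneg_left h8 hRi.le
    linarith
  · intro h8
    have := mul_le_mul_of_nonneg_left h8 hRi.le
    linarith

lemma eventually_mem_of_convex {S W : Set E} (hSo : IsOpen S) {q d x : E} (hW : W ∈ 𝓝 q)
    {g : E → ℝ} (hgq : g q = 0) {L : E →L[ℝ] ℝ} (hg : HasFDerivAt g L q)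
    (hfr : ∀ z ∈ W, z ∈ frontier S → g z = 0)
    (hd : ∀ᶠ R : ℝ in atTop, q + R⁻¹ • d ∈ S) (hsign : 0 < L d * L x) :
    ∀ᶠ R : ℝ in atTop, q + R⁻¹ • x ∈ S := by
  have hball : ∀ᶠ R : ℝ in atTop, ∀ y : E, ‖y‖ ≤ max ‖d‖ ‖x‖ → q + R⁻¹ • y ∈ W := by
    obtain ⟨δ, hδ, hb⟩ := Metric.mem_nhds_iff.1 hW
    filter_upwards [eventually_gt_atTop (0 : ℝ),
      eventually_gt_atTop (max ‖d‖ ‖x‖ / δ)] with R hR hR2 y hy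
    apply hb
    rw [Metric.mem_ball, dist_eq_norm, add_sub_cancel_left, norm_smul, Real.norm_eq_abs,
      abs_of_pos (inv_pos.2 hR), inv_mul_lt_iff₀ hR]
    rw [div_lt_iff₀ hδ] at hR2
    linarith
  set m : ℝ := min |L d| |L x| with hm
  have hd0 : L d ≠ 0 := left_ne_zero_of_mul hsign.ne'
  have hx0 : L x ≠ 0 := right_ne_zero_of_mul hsign.ne'
  have hm0 : 0 < m := lt_min (abs_pos.2 hd0) (abs_pos.2 hx0)
  filter_upwards [hd, hball, eventually_blowUp_pos hg hgq hm0 (M := max ‖d‖ ‖x‖)] with R h1 h2 h3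
  have hseg : ∀ y ∈ segment ℝ d x, q + R⁻¹ • y ∈ S ∪ (closure S)ᶜ := by
    intro y hy
    have hyn : ‖y‖ ≤ max ‖d‖ ‖x‖ := by
      have := (convex_closedBall (0 : E) (max ‖d‖ ‖x‖)).segment_subset (x := d) (y := x)
        (by simp) (by simp) hy
      simpa using this
    have hne : g (q + R⁻¹ • y) ≠ 0 := by
      rcases lt_or_gt_of_ne hd0 with hneg | hpos
      · have hxneg : L x < 0 := by nlinarith
        have h4 := (convex_halfSpace_le (𝕜 := ℝ) L.toLinearMap.isLinear (-m)).segment_subset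
          (x := d) (y := x)
          (by have : m ≤ |L d| := min_le_left _ _
              rw [abs_of_neg hneg] at this
              show L d ≤ -m; linarith)
          (by have : m ≤ |L x| := min_le_right _ _
              rw [abs_of_neg hxneg] at this
              show L x ≤ -m; linarith) hy
        exact ((h3 y hyn).2 h4).ne
      · have hxpos : 0 < L x := by
          by_contra h; push Not at h; nlinarith
        have h4 := (convex_halfSpace_ge (𝕜 := ℝ) L.toLinearMap.isLinear m).segment_subset
          (x := d) (y := x)
          (by have : m ≤ |L d| := min_le_left _ _
              rw [abs_of_pos hpos] at this
              exact this)
          (by have : m ≤ |L x| := min_le_right _ _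
              rw [abs_of_pos hxpos] at this
              exact this) hy
        exact ((h3 y hyn).1 h4).ne'
    by_contra h
    rw [mem_union, not_or, notMem_compl_iff] at h
    exact hne (hfr _ (h2 y hyn) ⟨h.2, by rw [hSo.interior_eq]; exact h.1⟩)
  have hpre : IsPreconnected ((fun y => q + R⁻¹ • y) '' segment ℝ d x) :=
    (convex_segment d x).isPreconnected.image _ (by fun_prop)
  have hne : ((fun y => q + R⁻¹ • y) '' segment ℝ d x ∩ S).Nonempty :=
    ⟨q + R⁻¹ • d, mem_image_of_mem _ (left_mem_segment ℝ d x), h1⟩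
  have hsub := hpre.subset_left_of_subset_union hSo isClosed_closure.isOpen_compl
    (disjoint_compl_right.mono_left subset_closure)
    (by rintro _ ⟨y, hy, rfl⟩; exact hseg y hy)
    hne
  exact hsub (mem_image_of_mem _ (right_mem_segment ℝ d x))

lemma halfSpaceBlowUp_of_convex {S W : Set E} (hSo : IsOpen S) (hSc : Convex ℝ S) {q : E}
    (hqS : q ∉ S) (hqc : q ∈ closure S) (hW : W ∈ 𝓝 q) {g : E → ℝ} (hgq : g q = 0)
    {L : E →L[ℝ] ℝ} (hg : HasFDerivAt g L q) (hL : L ≠ 0)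
    (hfr : ∀ z ∈ W, z ∈ frontier S → g z = 0) : HalfSpaceBlowUp S q L := by
  obtain ⟨d, hdS, hd⟩ : ∃ d ∈ S, L (d - q) ≠ 0 := by
    obtain ⟨d, hd⟩ : S.Nonempty := closure_nonempty_iff.1 ⟨q, hqc⟩
    by_cases h0 : L (d - q) = 0
    · obtain ⟨v, hv⟩ : ∃ v, L v ≠ 0 := by
        by_contra! h; exact hL (ContinuousLinearMap.ext h)
      have h1 := (tendsto_add_inv_smul d v).eventually (hSo.mem_nhds hd)
      obtain ⟨R, hR, hR0⟩ := (h1.and (eventually_gt_atTop (0 : ℝ))).exists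
      refine ⟨_, hR, ?_⟩
      rw [add_sub_right_comm, map_add, h0, zero_add, map_smul]
      exact smul_ne_zero (inv_ne_zero hR0.ne') hv
    · exact ⟨d, hd, h0⟩
  have hseg : ∀ᶠ R : ℝ in atTop, q + R⁻¹ • (d - q) ∈ S := by
    filter_upwards [eventually_gt_atTop (1 : ℝ)] with R hR
    have h1 := hSc.openSegment_interior_closure_subset_interior (x := d) (y := q)
      (by rwa [hSo.interior_eq]) hqc
    rw [hSo.interior_eq] at h1
    apply h1
    have h0 : 0 < R⁻¹ := inv_pos.2 (by linarith)
    have h2 : R⁻¹ < 1 := inv_lt_one_of_one_lt₀ hR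
    refine ⟨R⁻¹, 1 - R⁻¹, h0, by linarith, by ring, ?_⟩
    module
  have hsame : ∀ x, 0 < L (d - q) * L x → ∀ᶠ R : ℝ in atTop, q + R⁻¹ • x ∈ S := fun x hx =>
    eventually_mem_of_convex hSo hW hgq hg hfr hseg hx
  have hopp : ∀ x, L (d - q) * L x < 0 → ∀ᶠ R : ℝ in atTop, q + R⁻¹ • x ∉ S := by
    intro x hx
    filter_upwards [hsame (-x) (by rw [map_neg]; linarith)] with R hR h
    apply hqS
    have := hSc hR h (by norm_num : (0 : ℝ) ≤ 1 / 2) (by norm_num : (0 : ℝ) ≤ 1 / 2) (by norm_num)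
    convert this using 1
    module
  rcases lt_or_gt_of_ne hd with hneg | hpos
  · refine ⟨-1, Or.inr rfl, fun x hx => ?_⟩
    rcases lt_or_gt_of_ne hx with h | h
    · filter_upwards [hsame x (mul_pos_of_neg_of_neg hneg h)] with R hR
      exact iff_of_true hR (by linarith)
    · filter_upwards [hopp x (mul_neg_of_neg_of_pos hneg h)] with R hR
      exact iff_of_false hR (by linarith)
  · refine ⟨1, Or.inl rfl, fun x hx => ?_⟩
    rcases lt_or_gt_of_ne hx with h | h
    · filter_upwards [hopp x (mul_neg_of_pos_of_neg hpos h)] with R hR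
      exact iff_of_false hR (by linarith)
    · filter_upwards [hsame x (mul_pos hpos h)] with R hR
      exact iff_of_true hR (by linarith)

lemma frontier_inter_open_subset {X : Type*} [TopologicalSpace X] {A U : Set X} (hU : IsOpen U)
    {z : X} (hz : z ∈ U)
    (h : z ∈ frontier (A ∩ U)) : z ∈ frontier A := by
  rcases frontier_inter_subset A U h with h1 | h1
  · exact h1.1
  · rw [hU.frontier_eq] at h1
    exact absurd hz h1.2.2

lemma halfSpaceBlowUp_inter_iff {D U : Set E} (hU : IsOpen U) {q : E} (hq : q ∈ U)
    {L : E →L[ℝ] ℝ} (h : HalfSpaceBlowUp (D ∩ U) q L) : HalfSpaceBlowUp D q L := by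
  obtain ⟨σ, hσ, h⟩ := h
  refine ⟨σ, hσ, fun x hx => ?_⟩
  filter_upwards [h x hx, (tendsto_add_inv_smul q x).eventually (hU.mem_nhds hq)] with R h1 h2
  rw [← h1]
  exact ⟨fun h3 => ⟨h3, h2⟩, fun h3 => h3.1⟩

lemma exists_other_zero {g : E → ℝ} {W : Set E} (hW : IsOpen W) {q : E} (hqW : q ∈ W)
    (hgW : ContinuousOn g W) (hgq : g q = 0) {L : E →L[ℝ] ℝ} (hg : HasFDerivAt g L q) (hL : L ≠ 0)
    {y : E} (hy : y ≠ 0) (hLy : L y = 0) : ∃ z ∈ W, z ≠ q ∧ g z = 0 := by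
  obtain ⟨v, hv⟩ : ∃ v, 0 < L v := by
    by_contra! h
    refine hL (ContinuousLinearMap.ext fun v => le_antisymm (h v) ?_)
    have := h (-v)
    rw [map_neg] at this
    simpa using this
  obtain ⟨δ, hδ, hb⟩ := Metric.isOpen_iff.1 hW q hqW
  set M : ℝ := ‖y‖ + ‖v‖ with hM
  obtain ⟨R, h1, hR, hR2⟩ := ((eventually_blowUp_pos hg hgq hv (M := M)).and
    ((eventually_gt_atTop (0 : ℝ)).and (eventually_gt_atTop (M / δ)))).exists
  have hyM : ∀ a ∈ Icc (-1 : ℝ) 1, ‖y + a • v‖ ≤ M := by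
    intro a ha
    refine (norm_add_le _ _).trans ?_
    rw [norm_smul, Real.norm_eq_abs]
    have : |a| * ‖v‖ ≤ 1 * ‖v‖ := by gcongr; exact abs_le.2 ha
    linarith
  have hmem : ∀ a ∈ Icc (-1 : ℝ) 1, q + R⁻¹ • (y + a • v) ∈ W := by
    intro a ha
    apply hb
    rw [Metric.mem_ball, dist_eq_norm, add_sub_cancel_left, norm_smul, Real.norm_eq_abs,
      abs_of_pos (inv_pos.2 hR), inv_mul_lt_iff₀ hR]
    rw [div_lt_iff₀ hδ] at hR2
    linarith [hyM a ha]
  have hc : ContinuousOn (fun a : ℝ => g (q + R⁻¹ • (y + a • v))) (Icc (-1) 1) :=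
    hgW.comp (by fun_prop) hmem
  have hneg := (h1 _ (hyM (-1) (by simp))).2 (by simp [hLy])
  have hpos := (h1 _ (hyM 1 (by simp))).1 (by simp [hLy])
  obtain ⟨a, ha, h0⟩ := intermediate_value_Icc (by norm_num : (-1 : ℝ) ≤ 1) hc ⟨hneg.le, hpos.le⟩
  refine ⟨_, hmem a ha, ?_, h0⟩
  intro h2
  have h3 : R⁻¹ • (y + a • v) = 0 := by simpa using h2
  have h4 : y + a • v = 0 := (smul_eq_zero.1 h3).resolve_left (inv_ne_zero hR.ne')
  have h5 : a * L v = 0 := by simpa [hLy] using congrArg L h4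
  have h6 : a = 0 := (mul_eq_zero.1 h5).resolve_right hv.ne'
  rw [h6, zero_smul, add_zero] at h4
  exact hy h4

end Blowup

/-- A boundary chart `g` of `D` on `W`: the zero set of `g` is a hypersurface containing no segment,
at each point of which `D` blows up to a half space. -/
structure StrictChart (D : Set (V2 × V2)) (g : V2 × V2 → ℝ) (W : Set (V2 × V2)) : Prop where
  isOpen : IsOpen W
  contDiffOn : ContDiffOn ℝ 1 g W
  fderiv_ne_zero : ∀ q ∈ W, fderiv ℝ g q ≠ 0
  blowUp : ∀ q ∈ W, g q = 0 → HalfSpaceBlowUp D q (fderiv ℝ g q)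
  not_segment_subset : ∀ x ∈ W, ∀ y ∈ W, x ≠ y → ¬ segment ℝ x y ⊆ {q ∈ W | g q = 0}

lemma StrictChart.hasFDerivAt {D W : Set (V2 × V2)} {g : V2 × V2 → ℝ} (h : StrictChart D g W)
    {q : V2 × V2} (hq : q ∈ W) : HasFDerivAt g (fderiv ℝ g q) q :=
  ((h.contDiffOn.differentiableOn one_ne_zero).differentiableAt (h.isOpen.mem_nhds hq)).hasFDerivAt

lemma StrictChart.preimage {D W : Set (V2 × V2)} {g : V2 × V2 → ℝ} (h : StrictChart D g W)
    (e : (V2 × V2) ≃L[ℝ] (V2 × V2)) : StrictChart (e ⁻¹' D) (g ∘ e) (e ⁻¹' W) where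
  isOpen := h.isOpen.preimage e.continuous
  contDiffOn := h.contDiffOn.comp e.contDiff.contDiffOn fun _ hx => hx
  fderiv_ne_zero q hq h0 := by
    apply h.fderiv_ne_zero _ hq
    rw [e.comp_right_fderiv] at h0
    refine ContinuousLinearMap.ext fun x => ?_
    have := DFunLike.congr_fun h0 (e.symm x)
    simpa using this
  blowUp q hq hg := by
    obtain ⟨σ, hσ, hb⟩ := h.blowUp _ hq hg
    refine ⟨σ, hσ, fun x hx => ?_⟩
    rw [e.comp_right_fderiv] at hx ⊢
    filter_upwards [hb (e x) hx] with R hR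
    rw [mem_preimage, map_add, map_smul]
    exact hR
  not_segment_subset x hx y hy hxy hs := by
    refine h.not_segment_subset (e x) hx (e y) hy (e.injective.ne hxy) ?_
    have h1 : segment ℝ (e x) (e y) = e '' segment ℝ x y :=
      (image_segment ℝ e.toLinearMap.toAffineMap x y).symm
    rw [h1]
    rintro _ ⟨z, hz, rfl⟩
    exact hs hz

lemma exists_ker_ne_zero (L : (V2 × V2) →L[ℝ] ℝ) : ∃ y ≠ 0, L y = 0 := by
  have h : LinearMap.ker L.toLinearMap ≠ ⊥ := by
    apply LinearMap.ker_ne_bot_of_finrank_lt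
    simp [Module.finrank_prod]
  obtain ⟨y, hy, hy0⟩ := (Submodule.ne_bot_iff _).1 h
  exact ⟨y, hy0, hy⟩

theorem exists_strictChart {D U : Set (V2 × V2)} (hD : IsOpen D) (hU : IsOpen U)
    (hbd : (frontier D ∩ U).Nonempty) (hsmooth : IsSmoothHypersurface (frontier D ∩ U))
    (hconv : Convex ℝ (D ∩ U) ∨ Convex ℝ (Dᶜ ∩ U))
    (hstrict : ∀ x ∈ frontier D ∩ U, ∀ y ∈ frontier D ∩ U, x ≠ y →
      ¬ segment ℝ x y ⊆ frontier D ∩ U) :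
    ∃ p g W, StrictChart D g W ∧ p ∈ W ∧ g p = 0 := by
  obtain ⟨p, hp⟩ := hbd
  obtain ⟨W₀, g, hW₀, hpW₀, hg, hg', hM⟩ := hsmooth p hp
  have hzero : ∀ q ∈ W₀ ∩ U, (q ∈ frontier D ↔ g q = 0) := by
    intro q hq
    constructor
    · intro h
      have : q ∈ frontier D ∩ U ∩ W₀ := ⟨⟨h, hq.2⟩, hq.1⟩
      rw [hM] at this; exact this.2
    · intro h
      have : q ∈ {x ∈ W₀ | g x = 0} := ⟨hq.1, h⟩
      rw [← hM] at this; exact this.1.1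
  have hWo : IsOpen (W₀ ∩ U) := hW₀.inter hU
  have hg1 : ContDiffOn ℝ 1 g (W₀ ∩ U) :=
    (hg.of_le (by exact_mod_cast le_top)).mono inter_subset_left
  have hfd : ∀ q ∈ W₀ ∩ U, HasFDerivAt g (fderiv ℝ g q) q := fun q hq =>
    ((hg1.differentiableOn one_ne_zero).differentiableAt (hWo.mem_nhds hq)).hasFDerivAt
  refine ⟨p, g, W₀ ∩ U, ⟨hWo, hg1, fun q hq => hg' q hq.1, fun q hq hgq => ?_, ?_⟩,
    ⟨hpW₀, hp.2⟩, (hzero p ⟨hpW₀, hp.2⟩).1 hp.1⟩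
  · have hqD : q ∈ frontier D := (hzero q hq).2 hgq
    rcases hconv with hc | hc
    · refine halfSpaceBlowUp_inter_iff hU hq.2 ?_
      refine halfSpaceBlowUp_of_convex (hD.inter hU) hc ?_ ?_ (hWo.mem_nhds hq) hgq (hfd q hq)
        (hg' q hq.1) ?_
      · rw [hD.frontier_eq] at hqD
        exact fun h => hqD.2 h.1
      · exact hU.closure_inter ⟨frontier_subset_closure hqD, hq.2⟩
      · exact fun z hz h => (hzero z hz).1 (frontier_inter_open_subset hU hz.2 h)
    · set S : Set (V2 × V2) := interior Dᶜ ∩ U with hS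
      have hSint : interior (Dᶜ ∩ U) = S := by rw [interior_inter, hU.interior_eq]
      have hqc : q ∈ Dᶜ ∩ U := by
        rw [hD.frontier_eq] at hqD; exact ⟨hqD.2, hq.2⟩
      have hSne : S.Nonempty := by
        obtain ⟨y, hy, hLy⟩ := exists_ker_ne_zero (fderiv ℝ g q)
        obtain ⟨z, hz, hzq, hgz⟩ := exists_other_zero hWo hq hg1.continuousOn hgq (hfd q hq)
          (hg' q hq.1) hy hLy
        have hzD : z ∈ frontier D := (hzero z hz).2 hgz
        have hzc : z ∈ Dᶜ ∩ U := by
          rw [hD.frontier_eq] at hzD; exact ⟨hzD.2, hz.2⟩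
        obtain ⟨x, hx, hx2⟩ := not_subset.1 (hstrict z ⟨hzD, hz.2⟩ q ⟨hqD, hq.2⟩ hzq)
        have hxc : x ∈ Dᶜ ∩ U := hc.segment_subset hzc hqc hx
        refine ⟨x, ?_, hxc.2⟩
        rw [interior_compl]
        intro hcl
        exact hx2 ⟨by rw [hD.frontier_eq]; exact ⟨hcl, hxc.1⟩, hxc.2⟩
      have hclos : closure S = closure (Dᶜ ∩ U) := by
        rw [← hSint]
        exact hc.closure_interior_eq_closure_of_nonempty_interior (by rwa [hSint])
      have hfrS : ∀ z ∈ W₀ ∩ U, z ∈ frontier S → g z = 0 := by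
        intro z hz h
        have h1 := frontier_interior_subset (frontier_inter_open_subset hU hz.2 h)
        rw [frontier_compl] at h1
        exact (hzero z hz).1 h1
      obtain ⟨σ, hσ, hb⟩ := halfSpaceBlowUp_of_convex (S := S) (isOpen_interior.inter hU)
        (by rw [← hSint]; exact hc.interior)
        (by rw [hS, interior_compl]; exact fun h => h.1 (frontier_subset_closure hqD))
        (by rw [hclos]; exact subset_closure hqc) (hWo.mem_nhds hq) hgq (hfd q hq)
        (hg' q hq.1) hfrS
      refine ⟨-σ, by rcases hσ with h | h <;> simp [h], fun x hx => ?_⟩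
      have hne : ∀ᶠ R : ℝ in atTop, g (q + R⁻¹ • x) ≠ 0 := by
        filter_upwards [eventually_blowUp_pos (hfd q hq) hgq (abs_pos.2 hx) (M := ‖x‖)] with R hR
        obtain ⟨h1, h2⟩ := hR x le_rfl
        rcases le_or_gt 0 (fderiv ℝ g q x) with h | h
        · exact (h1 (abs_of_nonneg h).le).ne'
        · exact (h2 (by rw [abs_of_neg h, neg_neg])).ne
      filter_upwards [hb x hx, (tendsto_add_inv_smul q x).eventually (hWo.mem_nhds hq), hne]
        with R h1 h2 h3
      have h4 : q + R⁻¹ • x ∈ D ↔ q + R⁻¹ • x ∉ S := by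
        have h5 : q + R⁻¹ • x ∉ frontier D := fun h => h3 ((hzero _ h2).1 h)
        rw [hD.frontier_eq] at h5
        rw [hS, interior_compl]
        constructor
        · exact fun h6 h7 => h7.1 (subset_closure h6)
        · intro h6
          by_contra h7
          exact h6 ⟨fun h8 => h5 ⟨h8, h7⟩, h2.2⟩
      rw [h4, h1]
      have hσx : σ * fderiv ℝ g q x ≠ 0 :=
        mul_ne_zero (by rcases hσ with h | h <;> simp [h]) hx
      constructor
      · intro h
        push Not at h
        have := lt_of_le_of_ne h hσx
        linarith
      · intro h h'
        linarith
  · intro x hx y hy hxy hs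
    have hx0 := hs (left_mem_segment ℝ x y)
    have hy0 := hs (right_mem_segment ℝ x y)
    refine hstrict x ⟨(hzero x hx).2 hx0.2, hx.2⟩ y ⟨(hzero y hy).2 hy0.2, hy.2⟩ hxy fun z hz => ?_
    exact ⟨(hzero z (hs hz).1).2 (hs hz).2, (hs hz).1.2⟩

/-- If `∂g/∂η₁ ≠ 0`, the slice through `p` of the zero set is locally a graph. -/
lemma StrictChart.exists_slice_graph {D W : Set (V2 × V2)} {g : V2 × V2 → ℝ}
    (h : StrictChart D g W) {p : V2 × V2} (hp : p ∈ W) (hgp : g p = 0)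
    (hpd : fderiv ℝ g p ((0, 0), (1, 0)) ≠ 0) :
    ∃ (c : ℝ → ℝ) (y₀ δ : ℝ), 0 < δ ∧ ∀ y ∈ Icc y₀ (y₀ + δ), DifferentiableAt ℝ c y ∧
      (p.1, (c y, y)) ∈ W ∧ g (p.1, (c y, y)) = 0 ∧
      fderiv ℝ g (p.1, (c y, y)) ((0, 0), (1, 0)) ≠ 0 ∧
      fderiv ℝ g (p.1, (c y, y)) ((0, 0), (0, 1)) +
        deriv c y * fderiv ℝ g (p.1, (c y, y)) ((0, 0), (1, 0)) = 0 := by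
  let J : ℝ × ℝ → V2 × V2 := fun v => (p.1, (v.2, v.1))
  let JL : ℝ × ℝ →L[ℝ] V2 × V2 := (0 : ℝ × ℝ →L[ℝ] V2).prod
    ((ContinuousLinearMap.snd ℝ ℝ ℝ).prod (ContinuousLinearMap.fst ℝ ℝ ℝ))
  have hJ : ∀ v, HasFDerivAt J JL v := fun v =>
    (hasFDerivAt_const p.1 v).prodMk (hasFDerivAt_snd.prodMk hasFDerivAt_fst)
  have hJc : ContDiff ℝ 1 J := by fun_prop
  let v₀ : ℝ × ℝ := (p.2.2, p.2.1)
  have hJv : J v₀ = p := rfl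
  have hF : ContDiffAt ℝ 1 (g ∘ J) v₀ :=
    (h.contDiffOn.contDiffAt (h.isOpen.mem_nhds hp)).comp v₀ hJc.contDiffAt
  have hFd : fderiv ℝ (g ∘ J) v₀ = (fderiv ℝ g p).comp JL :=
    ((h.hasFDerivAt hp).comp v₀ (hJ v₀)).fderiv
  have hinv : (fderiv ℝ (g ∘ J) v₀ ∘L .inr ℝ ℝ ℝ).IsInvertible := by
    refine ⟨ContinuousLinearEquiv.unitsEquivAut ℝ (Units.mk0 _ hpd), ?_⟩
    ext
    simp [hFd, JL]
    rfl
  let c := hF.implicitFunction one_ne_zero hinv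
  have hc0 : c p.2.2 = p.2.1 := hF.implicitFunction_apply_self one_ne_zero hinv
  have hcc : ContDiffAt ℝ 1 c p.2.2 := hF.contDiffAt_implicitFunction one_ne_zero hinv
  have hz : ∀ᶠ y in 𝓝 p.2.2, g (p.1, (c y, y)) = 0 := by
    filter_upwards [hF.eventually_apply_implicitFunction one_ne_zero hinv] with y hy
    exact hy.trans hgp
  have hq : ContinuousAt (fun y => ((p.1, (c y, y)) : V2 × V2)) p.2.2 :=
    continuousAt_const.prodMk (hcc.continuousAt.prodMk continuousAt_id)
  have hq0 : ((p.1, (c p.2.2, p.2.2)) : V2 × V2) = p := by rw [hc0]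
  have hW : ∀ᶠ y in 𝓝 p.2.2, (p.1, (c y, y)) ∈ W :=
    hq.eventually_mem (by rw [hq0]; exact h.isOpen.mem_nhds hp)
  have hdne : ∀ᶠ y in 𝓝 p.2.2, fderiv ℝ g (p.1, (c y, y)) ((0, 0), (1, 0)) ≠ 0 := by
    have h1 : ContinuousAt (fun x => fderiv ℝ g x ((0, 0), (1, 0))) p :=
      ((h.contDiffOn.continuousOn_fderiv_of_isOpen h.isOpen le_rfl).continuousAt
        (h.isOpen.mem_nhds hp)).clm_apply continuousAt_const
    have h2 : ContinuousAt (fun y => fderiv ℝ g (p.1, (c y, y)) ((0, 0), (1, 0))) p.2.2 :=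
      ContinuousAt.comp (g := fun x => fderiv ℝ g x ((0, 0), (1, 0))) (by rwa [hq0]) hq
    exact h2.eventually_ne (by rwa [hq0])
  obtain ⟨ε, hε, hall⟩ := Metric.eventually_nhds_iff.1
    (((hcc.eventually (by simp)).and hz.eventually_nhds).and (hW.and hdne))
  refine ⟨c, p.2.2, ε / 2, by positivity, fun y hy => ?_⟩
  obtain ⟨⟨h1, h2⟩, h3, h4⟩ := hall (y := y) (by
    rw [Real.dist_eq, abs_lt]; constructor <;> linarith [hy.1, hy.2])
  have h5 : DifferentiableAt ℝ c y := h1.differentiableAt one_ne_zero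
  refine ⟨h5, h3, h2.self_of_nhds, h4, ?_⟩
  have h6 : HasDerivAt (fun y => ((p.1, (c y, y)) : V2 × V2)) (0, (deriv c y, 1)) y :=
    (hasDerivAt_const y p.1).prodMk (h5.hasDerivAt.prodMk (hasDerivAt_id y))
  have h7 := (h.hasFDerivAt h3).comp_hasDerivAt y h6
  have h8 : HasDerivAt (fun y => g (p.1, (c y, y))) 0 y :=
    (hasDerivAt_const y (0 : ℝ)).congr_of_eventuallyEq h2
  have h9 := h7.unique h8
  have h10 : (((0 : V2), (deriv c y, (1 : ℝ))) : V2 × V2) =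
      ((0, 0), (0, 1)) + deriv c y • ((0, 0), (1, 0)) := by
    ext <;> simp
  rw [h10, map_add, map_smul, smul_eq_mul] at h9
  exact h9

lemma fderiv_apply_eq (L : (V2 × V2) →L[ℝ] ℝ) {a : ℝ} (ha : a = L ((0, 0), (1, 0))) (ha0 : a ≠ 0)
    (x : V2 × V2) :
    L x = a * (dot2 x.1 (L ((1, 0), (0, 0)) / a, L ((0, 1), (0, 0)) / a) +
      dot2 x.2 (1, L ((0, 0), (0, 1)) / a)) := by
  have h1 : x = x.1.1 • (((1, 0), (0, 0)) : V2 × V2) + x.1.2 • (((0, 1), (0, 0)) : V2 × V2) +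
      x.2.1 • (((0, 0), (1, 0)) : V2 × V2) + x.2.2 • (((0, 0), (0, 1)) : V2 × V2) := by
    ext <;> simp
  conv_lhs => rw [h1]
  simp only [map_add, map_smul, smul_eq_mul, dot2, ← ha]
  field_simp
  ring

lemma HalfSpaceBlowUp.blowsUpTo {D : Set (V2 × V2)} {q : V2 × V2} {L : (V2 × V2) →L[ℝ] ℝ}
    (h : HalfSpaceBlowUp D q L) {u w : V2} {a : ℝ} (ha : a ≠ 0)
    (hL : ∀ x, L x = a * (dot2 x.1 u + dot2 x.2 w)) :
    ∃ τ : ℝ, (τ = 1 ∨ τ = -1) ∧ BlowsUpTo D q u w τ := by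
  obtain ⟨σ, hσ, h⟩ := h
  rcases lt_or_gt_of_ne ha with hn | hp
  · refine ⟨-σ, by rcases hσ with h | h <;> simp [h], fun x hx => ?_⟩
    filter_upwards [h x (by rw [hL]; exact mul_ne_zero ha hx)] with R hR
    rw [hR, hL, show σ * (a * (dot2 x.1 u + dot2 x.2 w)) =
      (-a) * (-σ * (dot2 x.1 u + dot2 x.2 w)) by ring, mul_pos_iff_of_pos_left (by linarith)]
  · refine ⟨σ, hσ, fun x hx => ?_⟩
    filter_upwards [h x (by rw [hL]; exact mul_ne_zero ha hx)] with R hR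
    rw [hR, hL, mul_left_comm, mul_pos_iff_of_pos_left hp]

theorem StrictChart.exists_blowUps {D W : Set (V2 × V2)} {g : V2 × V2 → ℝ}
    (h : StrictChart D g W) {p : V2 × V2} (hp : p ∈ W) (hgp : g p = 0)
    (hpd : fderiv ℝ g p ((0, 0), (1, 0)) ≠ 0) :
    ∃ (α κ Ku : ℝ) (η u : ℝ → V2) (τ : ℝ → ℝ), 0 < κ ∧ (∀ s ∈ Icc α (α + κ), ‖u s‖ ≤ Ku) ∧
      (∀ s ∈ Icc α (α + κ), τ s = 1 ∨ τ s = -1) ∧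
      ∀ s ∈ Icc α (α + κ), BlowsUpTo D (p.1, η s) (u s) (1, s) (τ s) := by
  obtain ⟨c, y₀, δ, hδ, hc⟩ := h.exists_slice_graph hp hgp hpd
  set q : ℝ → V2 × V2 := fun y => (p.1, (c y, y)) with hq
  have hqc : ContinuousOn q (Icc y₀ (y₀ + δ)) := continuousOn_const.prodMk
    (ContinuousOn.prodMk (fun y hy => (hc y hy).1.continuousAt.continuousWithinAt) continuousOn_id)
  have hd : ∀ e : V2 × V2, ContinuousOn (fun y => fderiv ℝ g (q y) e) (Icc y₀ (y₀ + δ)) := fun e =>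
    ((h.contDiffOn.continuousOn_fderiv_of_isOpen h.isOpen le_rfl).comp hqc
      fun y hy => (hc y hy).2.1).clm_apply continuousOn_const
  set a : ℝ → ℝ := fun y => fderiv ℝ g (q y) ((0, 0), (1, 0)) with ha
  have ha0 : ∀ y ∈ Icc y₀ (y₀ + δ), a y ≠ 0 := fun y hy => (hc y hy).2.2.2.1
  set m : ℝ → ℝ := fun y => fderiv ℝ g (q y) ((0, 0), (0, 1)) / a y with hm
  have hmc : ContinuousOn m (Icc y₀ (y₀ + δ)) := (hd _).div (hd _) ha0
  set U : ℝ → V2 := fun y => (fderiv ℝ g (q y) ((1, 0), (0, 0)) / a y,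
    fderiv ℝ g (q y) ((0, 1), (0, 0)) / a y) with hU
  have hUc : ContinuousOn U (Icc y₀ (y₀ + δ)) :=
    ((hd _).div (hd _) ha0).prodMk ((hd _).div (hd _) ha0)
  obtain ⟨Ku, hKu⟩ := isCompact_Icc.exists_bound_of_continuousOn hUc
  have hderiv : ∀ y ∈ Icc y₀ (y₀ + δ), deriv c y = -m y := by
    intro y hy
    have h1 := (hc y hy).2.2.2.2
    have h2 := ha0 y hy
    simp only [hm]
    field_simp
    change fderiv ℝ g (q y) ((0, 0), (0, 1)) + deriv c y * a y = 0 at h1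
    linarith
  obtain ⟨y₁, hy₁, hlt⟩ : ∃ y ∈ Icc y₀ (y₀ + δ), m y ≠ m y₀ := by
    by_contra! hconst
    have haff : ∀ y ∈ Icc y₀ (y₀ + δ), c y + m y₀ * y = c y₀ + m y₀ * y₀ := by
      refine constant_of_has_deriv_right_zero ?_ fun y hy => ?_
      · exact ContinuousOn.add (fun y hy => (hc y hy).1.continuousAt.continuousWithinAt)
          (by fun_prop)
      · have hy' := Ico_subset_Icc_self hy
        have h1 := ((hc y hy').1.hasDerivAt.add ((hasDerivAt_id y).const_mul (m y₀)))
        rw [hderiv y hy', hconst y hy'] at h1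
        have h2 : HasDerivAt (fun y => c y + m y₀ * y) (-m y₀ + m y₀ * 1) y := h1
        rw [mul_one, neg_add_cancel] at h2
        exact h2.hasDerivWithinAt
    have h0 : y₀ ∈ Icc y₀ (y₀ + δ) := ⟨le_rfl, by linarith⟩
    have h1 : y₀ + δ ∈ Icc y₀ (y₀ + δ) := ⟨by linarith, le_rfl⟩
    refine h.not_segment_subset (q y₀) (hc _ h0).2.1 (q (y₀ + δ)) (hc _ h1).2.1 ?_ ?_
    · intro heq
      have : y₀ = y₀ + δ := congrArg (fun z : V2 × V2 => z.2.2) heq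
      linarith
    · rintro z ⟨s, t, hs, ht, hst, rfl⟩
      have hy : y₀ + t * δ ∈ Icc y₀ (y₀ + δ) := by
        constructor
        · have := mul_nonneg ht hδ.le; linarith
        · have := mul_nonneg hs hδ.le
          have h3 : t * δ = δ - s * δ := by rw [← one_sub_mul, ← hst]; ring
          linarith
      have heq : s • q y₀ + t • q (y₀ + δ) = q (y₀ + t * δ) := by
        have hs' : s = 1 - t := by linarith
        have h2 := haff _ hy
        have h3 := haff _ h1
        have h4 : c (y₀ + δ) = c y₀ - m y₀ * δ := by linarith
        have h5 : c (y₀ + t * δ) = c y₀ - m y₀ * (t * δ) := by linarith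
        ext
        · simp [hq, hs']; ring
        · simp [hq, hs']; ring
        · simp only [hq, hs', Prod.snd_add, Prod.fst_add, Prod.smul_snd, Prod.smul_fst,
            smul_eq_mul, h4, h5]; ring
        · simp only [hq, hs', Prod.snd_add, Prod.smul_snd, smul_eq_mul]; ring
      rw [heq]
      exact ⟨(hc _ hy).2.1, (hc _ hy).2.2.1⟩
  have hsub : uIcc y₀ y₁ ⊆ Icc y₀ (y₀ + δ) := by
    rw [uIcc_of_le hy₁.1]; exact Icc_subset_Icc le_rfl hy₁.2
  have hiv := intermediate_value_uIcc (hmc.mono hsub)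
  have hκ : 0 < max (m y₀) (m y₁) - min (m y₀) (m y₁) := by
    rw [sub_pos]; exact min_lt_max.2 hlt.symm
  have hex : ∀ s ∈ Icc (min (m y₀) (m y₁))
      (min (m y₀) (m y₁) + (max (m y₀) (m y₁) - min (m y₀) (m y₁))),
      ∃ y ∈ Icc y₀ (y₀ + δ), m y = s := by
    intro s hs
    rw [add_sub_cancel] at hs
    obtain ⟨y, hy, h1⟩ := hiv hs
    exact ⟨y, hsub hy, h1⟩
  choose! Y hY hYm using hex
  have hτ : ∀ y ∈ Icc y₀ (y₀ + δ), ∃ τ : ℝ, (τ = 1 ∨ τ = -1) ∧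
      BlowsUpTo D (q y) (U y) (1, m y) τ := fun y hy =>
    (h.blowUp _ (hc y hy).2.1 (hc y hy).2.2.1).blowsUpTo (ha0 y hy)
      (fderiv_apply_eq _ rfl (ha0 y hy))
  choose! T hT hTb using hτ
  refine ⟨_, _, Ku, fun s => (c (Y s), Y s), fun s => U (Y s), fun s => T (Y s), hκ,
    fun s hs => hKu _ (hY s hs), fun s hs => hT _ (hY s hs), fun s hs => ?_⟩
  have h1 := hTb _ (hY s hs)
  rw [hYm s hs] at h1
  exact h1

lemma fderiv_comp_symm {g : V2 × V2 → ℝ} (e : (V2 × V2) ≃L[ℝ] (V2 × V2)) (x v : V2 × V2) :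
    fderiv ℝ (g ∘ e) (e.symm x) v = fderiv ℝ g x (e v) := by
  rw [e.comp_right_fderiv, e.apply_symm_apply]; rfl

/-- Interchange of the two coordinates in both frequency planes. -/
def coordSwapEquiv : (V2 × V2) ≃L[ℝ] (V2 × V2) :=
  (ContinuousLinearEquiv.prodComm ℝ ℝ ℝ).prodCongr (ContinuousLinearEquiv.prodComm ℝ ℝ ℝ)

section

variable {D W : Set (V2 × V2)} {g : V2 × V2 → ℝ} {x : V2 × V2} {p q r : ℝ} {C : ENNReal}

lemma LamBdd.false_of_chart_snd (h : LamBdd D p q r C) (hD : MeasurableSet D) (hC : C ≠ ⊤)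
    (hp : 0 < p) (hq : 0 < q) (hr : 0 < r) (hs : p⁻¹ + q⁻¹ + r⁻¹ = 1) (hr2 : r < 2)
    (hch : StrictChart D g W) (hx : x ∈ W) (hgx : g x = 0) {v : V2}
    (hv : fderiv ℝ g x (0, v) ≠ 0) : False := by
  have main : ∀ (D W : Set (V2 × V2)) (g : V2 × V2 → ℝ) (x : V2 × V2), LamBdd D p q r C →
      MeasurableSet D → StrictChart D g W → x ∈ W → g x = 0 →
      fderiv ℝ g x ((0, 0), (1, 0)) ≠ 0 → False := by
    intro D W g x h hD hch hx hgx hv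
    obtain ⟨α, κ, Ku, η, u, τ, hκ, hu, hτ, hb⟩ := hch.exists_blowUps hx hgx hv
    exact h.false_of_blowUps hD hp hq hr hs hr2 hC x.1 hκ η u τ hu hτ hb
  by_cases h1 : fderiv ℝ g x ((0, 0), (1, 0)) = 0
  · refine main _ _ _ (coordSwapEquiv.symm x) (h.coordSwap hp hq hr hs)
      (hD.preimage coordSwapEquiv.continuous.measurable) (hch.preimage coordSwapEquiv) ?_ ?_ ?_
    · rw [mem_preimage, coordSwapEquiv.apply_symm_apply]; exact hx
    · rw [Function.comp_apply, coordSwapEquiv.apply_symm_apply]; exact hgx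
    · rw [fderiv_comp_symm]
      intro h2
      change fderiv ℝ g x ((0, 0), (0, 1)) = 0 at h2
      apply hv
      have : (((0 : V2), v) : V2 × V2) = v.1 • ((0, 0), (1, 0)) + v.2 • ((0, 0), (0, 1)) := by
        ext <;> simp
      rw [this, map_add, map_smul, map_smul, h1, h2]; simp
  · exact main D W g x h hD hch hx hgx h1

lemma LamBdd.false_of_chart (h : LamBdd D p q r C) (hD : MeasurableSet D) (hC : C ≠ ⊤)
    (hp : 0 < p) (hq : 0 < q) (hr : 0 < r) (hs : p⁻¹ + q⁻¹ + r⁻¹ = 1) (hr2 : r < 2)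
    (hch : StrictChart D g W) (hx : x ∈ W) (hgx : g x = 0) : False := by
  obtain ⟨v, hv⟩ : ∃ v, fderiv ℝ g x v ≠ 0 := by
    by_contra! h0
    exact hch.fderiv_ne_zero x hx (ContinuousLinearMap.ext h0)
  by_cases h1 : fderiv ℝ g x (0, v.2) = 0
  · let e := ContinuousLinearEquiv.prodComm ℝ V2 V2
    refine h.swap.false_of_chart_snd (hD.preimage e.continuous.measurable) hC hq hp hr
      (by rw [← hs]; ring) hr2 (hch.preimage e) (x := e.symm x) (v := v.1) ?_ ?_ ?_
    · rw [mem_preimage, e.apply_symm_apply]; exact hx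
    · rw [Function.comp_apply, e.apply_symm_apply]; exact hgx
    · rw [fderiv_comp_symm]
      intro h2
      change fderiv ℝ g x (v.1, 0) = 0 at h2
      apply hv
      have : v = (v.1, 0) + (0, v.2) := by simp
      rw [this, map_add, h1, h2, add_zero]
  · exact h.false_of_chart_snd hD hC hp hq hr hs hr2 hch hx hgx h1

lemma LamBdd.false_of_chart_left (h : LamBdd D p q r C) (hD : MeasurableSet D) (hC : C ≠ ⊤)
    (hp : 0 < p) (hq : 0 < q) (hr : 0 < r) (hs : p⁻¹ + q⁻¹ + r⁻¹ = 1) (hp2 : p < 2)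
    (hch : StrictChart D g W) (hx : x ∈ W) (hgx : g x = 0) : False := by
  refine h.rot.false_of_chart (hD.preimage _root_.rot.continuous.measurable) hC hr hq hp
    (by rw [← hs]; ring) hp2 (hch.preimage _root_.rot) (x := _root_.rot.symm x) ?_ ?_
  · rw [mem_preimage, ContinuousLinearEquiv.apply_symm_apply]; exact hx
  · rw [Function.comp_apply, ContinuousLinearEquiv.apply_symm_apply]; exact hgx

lemma LamBdd.false_of_chart_middle (h : LamBdd D p q r C) (hD : MeasurableSet D) (hC : C ≠ ⊤)
    (hp : 0 < p) (hq : 0 < q) (hr : 0 < r) (hs : p⁻¹ + q⁻¹ + r⁻¹ = 1) (hq2 : q < 2)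
    (hch : StrictChart D g W) (hx : x ∈ W) (hgx : g x = 0) : False := by
  let e := ContinuousLinearEquiv.prodComm ℝ V2 V2
  refine h.swap.false_of_chart_left (hD.preimage e.continuous.measurable) hC hq hp hr
    (by rw [← hs]; ring) hq2 (hch.preimage e) (x := e.symm x) ?_ ?_
  · rw [mem_preimage, e.apply_symm_apply]; exact hx
  · rw [Function.comp_apply, e.apply_symm_apply]; exact hgx

end

/-- **Corollary.** If `D ⊆ ℝ⁴` is a domain whose boundary is a smooth hypersurface in
some open set `U`, and `D` (or its complement) is strictly convex there, then `T_D` is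
unbounded from `L^{p₁} × L^{p₂}` to `L^{p₃'}` whenever `1/p₁+1/p₂+1/p₃ = 1`,
`1 < pₖ < ∞` and exactly one `pₖ` is `< 2`. -/
theorem corollary_strictly_convex (D : Set (V2 × V2)) (hD : IsOpen D)
    (hconn : IsConnected D)
    (U : Set (V2 × V2)) (hU : IsOpen U) (hbd : (frontier D ∩ U).Nonempty)
    (hsmooth : IsSmoothHypersurface (frontier D ∩ U))
    (hconv : Convex ℝ (D ∩ U) ∨ Convex ℝ (Dᶜ ∩ U))
    (hstrict : ∀ x ∈ frontier D ∩ U, ∀ y ∈ frontier D ∩ U, x ≠ y →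
      ¬ segment ℝ x y ⊆ frontier D ∩ U)
    (p : Fin 3 → ℝ) (hp : ∀ k, 1 < p k)
    (hsum : (p 0)⁻¹ + (p 1)⁻¹ + (p 2)⁻¹ = 1)
    (hone : ∃! k : Fin 3, p k < 2) :
    ¬ ∃ C : ℝ, ∀ f g : SchwartzMap V2 ℂ,
      eLpNorm (TD D ⇑f ⇑g) (ENNReal.ofReal (p 2 / (p 2 - 1))) volume ≤
        ENNReal.ofReal C * (eLpNorm (⇑f) (ENNReal.ofReal (p 0)) volume *
          eLpNorm (⇑g) (ENNReal.ofReal (p 1)) volume) := by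
  rintro ⟨C, hC⟩
  obtain ⟨x, g, W, hch, hx, hgx⟩ := exists_strictChart hD hU hbd hsmooth hconv hstrict
  have hB := lamBdd_of_TD hD.measurableSet (hp 2) hC
  have h0 : ∀ k, 0 < p k := fun k => zero_lt_one.trans (hp k)
  obtain ⟨k, hk, -⟩ := hone
  fin_cases k
  · exact hB.false_of_chart_left hD.measurableSet ENNReal.ofReal_ne_top (h0 0) (h0 1) (h0 2) hsum hk
      hch hx hgx
  · exact hB.false_of_chart_middle hD.measurableSet ENNReal.ofReal_ne_top (h0 0) (h0 1) (h0 2) hsum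
      hk hch hx hgx
  · exact hB.false_of_chart hD.measurableSet ENNReal.ofReal_ne_top (h0 0) (h0 1) (h0 2) hsum hk
      hch hx hgx
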